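/- arXiv:1903.03197 — 2 statements merged into one kernel-verified Lean document; each statement's English description precedes it below -/
import Mathlib

section
/- The cycle C_11 is the only well-indumatched unicyclic graph of girth 11; that is, every well-indumatched unicyclic graph whose unique cycle has length 11 is isomorphic to C_11. -/
open SimpleGraph

/-- `M` is an induced matching of `G`: a set of edges of `G` such that no two distinct
edges of `M` share an endpoint or have endpoints joined by an edge of `G`. -/
def IsInducedMatching {V : Type*} (G : SimpleGraph V) (M : Set (Sym2 V)) : Prop :=
  M ⊆ G.edgeSet ∧
    ∀ e ∈ M, ∀ f ∈ M, e ≠ f → ∀ u ∈ e, ∀ v ∈ f, u ≠ v ∧ ¬ G.Adj u v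

/-- `M` is a maximal induced matching of `G`. -/
def IsMaximalInducedMatching {V : Type*} (G : SimpleGraph V) (M : Set (Sym2 V)) : Prop :=
  IsInducedMatching G M ∧
    ∀ N : Set (Sym2 V), IsInducedMatching G N → M ⊆ N → N = M

/-- `G` is well-indumatched: all of its maximal induced matchings have the same size. -/
def WellIndumatched {V : Type*} (G : SimpleGraph V) : Prop :=
  ∀ M N : Set (Sym2 V), IsMaximalInducedMatching G M → IsMaximalInducedMatching G N →
    M.ncard = N.ncard

namespace WIM

variable {V : Type*}

/-- `u` lies in the closed neighbourhood of (the vertices of) `M`. -/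
def Dom (G : SimpleGraph V) (M : Set (Sym2 V)) (u : V) : Prop :=
  ∃ f ∈ M, ∃ w ∈ f, u = w ∨ G.Adj u w

lemma indep_iff (G : SimpleGraph V) (M : Set (Sym2 V)) : IsInducedMatching G M ↔
    M ⊆ G.edgeSet ∧ ∀ e ∈ M, ∀ f ∈ M, e ≠ f → ∀ u ∈ e, ∀ v ∈ f, ¬ (u = v ∨ G.Adj u v) := by
  unfold IsInducedMatching
  simp only [not_or, ne_eq]

lemma exists_maximal [Finite V] (G : SimpleGraph V) (M : Set (Sym2 V))
    (hM : IsInducedMatching G M) : ∃ N, M ⊆ N ∧ IsMaximalInducedMatching G N := by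
  obtain ⟨N, hMN, hN⟩ := (Set.toFinite {N : Set (Sym2 V) | IsInducedMatching G N}).exists_le_maximal hM
  refine ⟨N, hMN, hN.1, fun N' h h' => ?_⟩
  exact (hN.2 h h').antisymm h'

lemma exchange [Finite V] (G : SimpleGraph V) (hW : WellIndumatched G) (A B : Set (Sym2 V))
    (hA : IsInducedMatching G A) (hB : IsInducedMatching G B) (hlt : A.ncard < B.ncard)
    (hd : ∀ u v, G.Adj u v → Dom G B u → Dom G A u ∨ Dom G A v) : False := by
  obtain ⟨M, hAM, hM⟩ := exists_maximal G A hA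
  have hMi := (indep_iff G M).1 hM.1
  have hBi := (indep_iff G B).1 hB
  have key : ∀ f ∈ M, f ∉ A → ∀ u ∈ f, ¬ Dom G B u := by
    intro f hf hfA u hu hdu
    obtain ⟨v, rfl⟩ := Sym2.mem_iff_exists.1 hu
    have hadj : G.Adj u v := hMi.1 hf
    rcases hd u v hadj hdu with ⟨g, hg, w, hw, h⟩ | ⟨g, hg, w, hw, h⟩
    · exact hMi.2 _ hf g (hAM hg) (fun h => hfA (h ▸ hg)) u (by simp) w hw h
    · exact hMi.2 _ hf g (hAM hg) (fun h => hfA (h ▸ hg)) v (by simp) w hw h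
  have hdisj : Disjoint B (M \ A) := by
    rw [Set.disjoint_left]
    intro f hfB hf
    induction f with
    | _ u v => exact key _ hf.1 hf.2 u (by simp) ⟨_, hfB, u, by simp, Or.inl rfl⟩
  have hN : IsInducedMatching G (B ∪ (M \ A)) := by
    rw [indep_iff]
    refine ⟨Set.union_subset hBi.1 (Set.sdiff_subset.trans hMi.1), ?_⟩
    rintro e (he | he) f (hf | hf) hne u hu v hv h
    · exact hBi.2 e he f hf hne u hu v hv h
    · exact key f hf.1 hf.2 v hv ⟨e, he, u, hu, h.imp Eq.symm fun h => h.symm⟩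
    · exact key e he.1 he.2 u hu ⟨f, hf, v, hv, h⟩
    · exact hMi.2 e he.1 f hf.1 hne u hu v hv h
  obtain ⟨N, hBN, hN⟩ := exists_maximal G _ hN
  have h1 := hW M N hM hN
  have h2 : (B ∪ (M \ A)).ncard ≤ N.ncard := Set.ncard_le_ncard hBN (Set.toFinite _)
  rw [Set.ncard_union_eq hdisj (Set.toFinite _) (Set.toFinite _)] at h2
  have h3 := Set.ncard_sdiff_add_ncard_of_subset hAM (Set.toFinite _)
  omega

/-- adding a family of pairwise non-conflicting edges to an induced matching. -/
lemma family [Finite V] (G : SimpleGraph V) (K : Set (Sym2 V)) (hK : IsInducedMatching G K)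
    {ι : Type*} (P : Finset ι) (p p' : ι → V) (hadj : ∀ t ∈ P, G.Adj (p t) (p' t))
    (hKp : ∀ t ∈ P, ¬ Dom G K (p t) ∧ ¬ Dom G K (p' t))
    (hpw : ∀ t ∈ P, ∀ s ∈ P, t ≠ s → ∀ u, (u = p t ∨ u = p' t) → ∀ v, (v = p s ∨ v = p' s) →
      ¬ (u = v ∨ G.Adj u v)) :
    IsInducedMatching G (K ∪ (fun t => s(p t, p' t)) '' P) ∧
    (K ∪ (fun t => s(p t, p' t)) '' P).ncard = K.ncard + P.card := by
  have hKi := (indep_iff G K).1 hK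
  constructor
  · rw [indep_iff]
    constructor
    · refine Set.union_subset hKi.1 ?_
      rintro _ ⟨t, ht, rfl⟩
      exact hadj t ht
    · rintro e (he | ⟨t, ht, rfl⟩) f (hf | ⟨s, hs, rfl⟩) hne u hu v hv h
      · exact hKi.2 e he f hf hne u hu v hv h
      · have : Dom G K v := ⟨e, he, u, hu, h.imp Eq.symm fun h => h.symm⟩
        rcases Sym2.mem_iff.1 hv with rfl | rfl
        · exact (hKp s hs).1 this
        · exact (hKp s hs).2 this
      · have : Dom G K u := ⟨f, hf, v, hv, h⟩
        rcases Sym2.mem_iff.1 hu with rfl | rfl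
        · exact (hKp t ht).1 this
        · exact (hKp t ht).2 this
      · exact hpw t ht s hs (fun h => hne (h ▸ rfl)) u (Sym2.mem_iff.1 hu) v (Sym2.mem_iff.1 hv) h
  · rw [Set.ncard_union_eq _ (Set.toFinite _) (Set.toFinite _), Set.InjOn.ncard_image,
      Set.ncard_coe_finset]
    · intro t ht s hs h
      by_contra hne
      have h0 : p t ∈ s(p s, p' s) := by
        have : p t ∈ s(p t, p' t) := by simp
        simpa only [h] using this
      exact hpw t ht s hs hne (p t) (Or.inl rfl) (p t) (Sym2.mem_iff.1 h0) (Or.inl rfl)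
    · rw [Set.disjoint_left]
      rintro _ he ⟨t, ht, rfl⟩
      exact (hKp t ht).1 ⟨_, he, p t, by simp, Or.inl rfl⟩

/-- The cycle-with-trees structure: `c` enumerates the cycle, `ρ` gives the root. -/
structure Str (G : SimpleGraph V) (c : Fin 11 → V) (ρ : V → Fin 11) : Prop where
  adj : ∀ i j, G.Adj (c i) (c j) ↔ (j = i + 1 ∨ i = j + 1)
  root : ∀ i, ρ (c i) = i
  edge : ∀ u v, G.Adj u v → u ∉ Set.range c → ρ u = ρ v

lemma Str.rotate {G : SimpleGraph V} {c : Fin 11 → V} {ρ : V → Fin 11} (h : Str G c ρ)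
    (k : Fin 11) : Str G (fun i => c (k + i)) (fun v => ρ v - k) := by
  have hr : Set.range (fun i => c (k + i)) = Set.range c :=
    (Equiv.addLeft k).surjective.range_comp c
  refine ⟨fun i j => ?_, fun i => ?_, fun u v hu hc => ?_⟩
  · rw [h.adj]
    simp only [add_assoc, add_right_inj]
  · simp only [h.root]; abel
  · rw [hr] at hc
    simp only [h.edge u v hu hc]

/-- live pendant vertex at `c i`. -/
def LL (G : SimpleGraph V) (c : Fin 11 → V) (K : Set (Sym2 V)) (i : Fin 11) : Prop :=
  ∃ z, z ∉ Set.range c ∧ G.Adj (c i) z ∧ ¬ Dom G K z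

/-- live pendant path of length two at `c i`. -/
def DD (G : SimpleGraph V) (c : Fin 11 → V) (K : Set (Sym2 V)) (i : Fin 11) : Prop :=
  ∃ z w, z ∉ Set.range c ∧ G.Adj (c i) z ∧ ¬ Dom G K z ∧ w ∉ Set.range c ∧ G.Adj z w ∧
    ¬ Dom G K w

/-- shadows of endpoints of the abstract edges. -/
def ep1 (t : Fin 3 × Fin 11) : Fin 11 × Bool :=
  (t.2, decide (t.1 ≠ 2))

def ep2 (t : Fin 3 × Fin 11) : Fin 11 × Bool :=
  if t.1 = 0 then (t.2 + 1, true) else (t.2, false)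

def near (a b : Fin 11 × Bool) : Prop :=
  a.1 = b.1 ∨ (a.2 = true ∧ b.2 = true ∧ (b.1 = a.1 + 1 ∨ a.1 = b.1 + 1))

instance (a b : Fin 11 × Bool) : Decidable (near a b) := by unfold near; infer_instance

def nearE (a : Fin 11 × Bool) (t : Fin 3 × Fin 11) : Prop := near a (ep1 t) ∨ near a (ep2 t)

instance (a : Fin 11 × Bool) (t : Fin 3 × Fin 11) : Decidable (nearE a t) := by
  unfold nearE; infer_instance

def nearQ (Q : Finset (Fin 3 × Fin 11)) (a : Fin 11 × Bool) : Prop := ∃ t ∈ Q, nearE a t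

instance (Q : Finset (Fin 3 × Fin 11)) (a : Fin 11 × Bool) : Decidable (nearQ Q a) := by
  unfold nearQ; infer_instance

def indepQ (Q : Finset (Fin 3 × Fin 11)) : Prop :=
  ∀ t ∈ Q, ∀ s ∈ Q, t ≠ s → ¬ nearE (ep1 t) s ∧ ¬ nearE (ep2 t) s

instance (Q : Finset (Fin 3 × Fin 11)) : Decidable (indepQ Q) := by
  unfold indepQ; infer_instance

def offZ (Q : Finset (Fin 3 × Fin 11)) (Z : Finset (Fin 11)) : Prop :=
  ∀ t ∈ Q, ((ep1 t).2 = true → (ep1 t).1 ∉ Z) ∧ ((ep2 t).2 = true → (ep2 t).1 ∉ Z)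

instance (Q : Finset (Fin 3 × Fin 11)) (Z : Finset (Fin 11)) : Decidable (offZ Q Z) := by
  unfold offZ; infer_instance

/-- The decidable part of the exchange argument. -/
def Chk (P Q : Finset (Fin 3 × Fin 11)) (Z LN DN : Finset (Fin 11)) : Prop :=
  (∀ t ∈ P, t.1 = 0) ∧ indepQ P ∧ indepQ Q ∧ offZ P Z ∧ offZ Q Z ∧ P.card < Q.card ∧
  (∀ i, nearQ Q (i, true) →
    ((nearQ P (i, true) ∨ i ∈ Z) ∨ ((nearQ P (i + 1, true) ∨ i + 1 ∈ Z) ∧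
      (nearQ P (i - 1, true) ∨ i - 1 ∈ Z)))) ∧
  (∀ i, nearQ Q (i, true) → nearQ P (i, true) ∨ i ∈ Z ∨ i ∈ LN) ∧
  (∀ i, nearQ Q (i, false) → nearQ P (i, false) ∨ i ∈ DN)

instance (P Q : Finset (Fin 3 × Fin 11)) (Z LN DN : Finset (Fin 11)) :
    Decidable (Chk P Q Z LN DN) := by
  unfold Chk; infer_instance

set_option maxRecDepth 100000 in
lemma chk1 : Chk {(0,0),(0,4)} {(0,1),(0,4),(2,0)} ∅ ∅ {2} := by decide
set_option maxRecDepth 100000 in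
lemma chk2 : Chk {(0,0)} {(2,0),(2,1)} ∅ ∅ ∅ := by decide
set_option maxRecDepth 100000 in
lemma chk3 : Chk {(0,0),(0,5)} {(0,2),(0,5),(1,0)} ∅ {3} Finset.univ := by decide
set_option maxRecDepth 100000 in
lemma chk4 : Chk {(0,0),(0,4)} {(0,2),(1,0),(1,5)} ∅ ∅ Finset.univ := by decide
set_option maxRecDepth 100000 in
lemma chk5 : Chk {(0,3),(0,8)} {(0,1),(0,4),(0,7)} {0} {1,6} {1,2,3,4,5,6,7,8,9,10} := by decide

def Sh (c : Fin 11 → V) (ρ : V → Fin 11) (u : V) (a : Fin 11 × Bool) : Prop :=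
  ρ u = a.1 ∧ (u ∈ Set.range c → a.2 = true) ∧ (a.2 = true → u = c a.1)

lemma sh_cyc {G : SimpleGraph V} {c : Fin 11 → V} {ρ : V → Fin 11} (h : Str G c ρ) (i : Fin 11) :
    Sh c ρ (c i) (i, true) := ⟨h.root i, fun _ => rfl, fun _ => rfl⟩

lemma sh_non {c : Fin 11 → V} {ρ : V → Fin 11} {u : V} {i : Fin 11}
    (hu : u ∉ Set.range c) (hi : ρ u = i) : Sh c ρ u (i, false) :=
  ⟨hi, fun h => absurd h hu, fun h => by simp at h⟩

lemma near_of {G : SimpleGraph V} {c : Fin 11 → V} {ρ : V → Fin 11} (h : Str G c ρ)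
    {u v : V} {a b : Fin 11 × Bool} (hu : Sh c ρ u a) (hv : Sh c ρ v b)
    (huv : u = v ∨ G.Adj u v) : near a b := by
  rcases huv with rfl | huv
  · exact Or.inl (hu.1.symm.trans hv.1)
  · by_cases h1 : u ∈ Set.range c
    · by_cases h2 : v ∈ Set.range c
      · right
        have ha := hu.2.1 h1
        have hb := hv.2.1 h2
        refine ⟨ha, hb, ?_⟩
        rw [hu.2.2 ha, hv.2.2 hb] at huv
        exact (h.adj _ _).1 huv
      · left
        rw [← hu.1, ← hv.1]
        exact (h.edge v u huv.symm h2).symm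
    · left
      rw [← hu.1, ← hv.1]
      exact h.edge u v huv h1

lemma rho_kid {G : SimpleGraph V} {c : Fin 11 → V} {ρ : V → Fin 11} (h : Str G c ρ)
    {z : V} {i : Fin 11} (hz : z ∉ Set.range c) (ha : G.Adj (c i) z) : ρ z = i := by
  rw [h.edge z (c i) ha.symm hz, h.root]

lemma realize {G : SimpleGraph V} {c : Fin 11 → V} {ρ : V → Fin 11} (h : Str G c ρ)
    (K : Set (Sym2 V)) (Z : Finset (Fin 11)) (hZ : ∀ i, i ∉ Z → ¬ Dom G K (c i))
    (Q : Finset (Fin 3 × Fin 11)) (hoff : offZ Q Z)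
    (hL : ∀ t ∈ Q, t.1 = 1 → LL G c K t.2) (hD : ∀ t ∈ Q, t.1 = 2 → DD G c K t.2) :
    ∃ p p' : Fin 3 × Fin 11 → V, ∀ t ∈ Q, G.Adj (p t) (p' t) ∧ ¬ Dom G K (p t) ∧
      ¬ Dom G K (p' t) ∧ Sh c ρ (p t) (ep1 t) ∧ Sh c ρ (p' t) (ep2 t) := by
  have : ∀ t : Fin 3 × Fin 11, ∃ u u' : V, t ∈ Q → G.Adj u u' ∧ ¬ Dom G K u ∧
      ¬ Dom G K u' ∧ Sh c ρ u (ep1 t) ∧ Sh c ρ u' (ep2 t) := by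
    intro t
    by_cases ht : t ∈ Q
    swap
    · exact ⟨c 0, c 0, fun h => absurd h ht⟩
    have ho := hoff t ht
    obtain ⟨k, i⟩ := t
    have hk : k = 0 ∨ k = 1 ∨ k = 2 := by omega
    rcases hk with rfl | rfl | rfl
    · refine ⟨c i, c (i + 1), fun _ => ⟨(h.adj _ _).2 (Or.inl rfl), hZ _ (ho.1 rfl),
        hZ _ (ho.2 rfl), sh_cyc h _, sh_cyc h _⟩⟩
    · obtain ⟨z, hz, ha, hd⟩ := hL _ ht rfl
      exact ⟨c i, z, fun _ => ⟨ha, hZ _ (ho.1 rfl), hd, sh_cyc h _, sh_non hz (rho_kid h hz ha)⟩⟩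
    · obtain ⟨z, w, hz, ha, hd, hw, hzw, hdw⟩ := hD _ ht rfl
      exact ⟨z, w, fun _ => ⟨hzw, hd, hdw, sh_non hz (rho_kid h hz ha),
        sh_non hw ((h.edge z w hzw hz).symm.trans (rho_kid h hz ha))⟩⟩
  choose p p' hp using this
  exact ⟨p, p', hp⟩

lemma fam_of {G : SimpleGraph V} [Finite V] {c : Fin 11 → V} {ρ : V → Fin 11} (h : Str G c ρ)
    (K : Set (Sym2 V)) (hK : IsInducedMatching G K) (Q : Finset (Fin 3 × Fin 11)) (hQ : indepQ Q)
    (p p' : Fin 3 × Fin 11 → V) (hp : ∀ t ∈ Q, G.Adj (p t) (p' t) ∧ ¬ Dom G K (p t) ∧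
      ¬ Dom G K (p' t) ∧ Sh c ρ (p t) (ep1 t) ∧ Sh c ρ (p' t) (ep2 t)) :
    IsInducedMatching G (K ∪ (fun t => s(p t, p' t)) '' Q) ∧
    (K ∪ (fun t => s(p t, p' t)) '' Q).ncard = K.ncard + Q.card := by
  refine family G K hK Q p p' (fun t ht => (hp t ht).1)
    (fun t ht => ⟨(hp t ht).2.1, (hp t ht).2.2.1⟩) ?_
  intro t ht s hs hne u hu v hv huv
  obtain ⟨-, -, -, t1, t2⟩ := hp t ht
  obtain ⟨-, -, -, s1, s2⟩ := hp s hs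
  obtain ⟨q1, q2⟩ := hQ t ht s hs hne
  rcases hu with rfl | rfl <;> rcases hv with rfl | rfl
  · exact q1 (Or.inl (near_of h t1 s1 huv))
  · exact q1 (Or.inr (near_of h t1 s2 huv))
  · exact q2 (Or.inl (near_of h t2 s1 huv))
  · exact q2 (Or.inr (near_of h t2 s2 huv))

lemma nearQ_mono {Q : Finset (Fin 3 × Fin 11)} {i : Fin 11} (h : nearQ Q (i, false)) :
    nearQ Q (i, true) := by
  obtain ⟨t, ht, h | h⟩ := h
  · refine ⟨t, ht, Or.inl (Or.inl ?_)⟩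
    rcases h with h | h
    · exact h
    · simp at h
  · refine ⟨t, ht, Or.inr (Or.inl ?_)⟩
    rcases h with h | h
    · exact h
    · simp at h

lemma core [Finite V] {G : SimpleGraph V} (hW : WellIndumatched G)
    {c : Fin 11 → V} {ρ : V → Fin 11} (h : Str G c ρ)
    (K : Set (Sym2 V)) (hK : IsInducedMatching G K) (P Q : Finset (Fin 3 × Fin 11))
    (Z LN DN : Finset (Fin 11)) (hchk : Chk P Q Z LN DN)
    (hZ : ∀ i, i ∉ Z → ¬ Dom G K (c i)) (hZ' : ∀ i ∈ Z, Dom G K (c i))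
    (hLN : ∀ i ∈ LN, ¬ LL G c K i) (hDN : ∀ i ∈ DN, ¬ DD G c K i)
    (hL : ∀ t ∈ Q, t.1 = 1 → LL G c K t.2) (hD : ∀ t ∈ Q, t.1 = 2 → DD G c K t.2)
    (hfar : (∀ t ∈ Q, t.1 = 0) ∨ ∀ u v, G.Adj u v → u ∉ Set.range c → v ∉ Set.range c →
      (∀ i, ¬ G.Adj (c i) u) → (∀ i, ¬ G.Adj (c i) v) → Dom G K u ∨ Dom G K v) : False := by
  obtain ⟨hP0, hPi, hQi, hPo, hQo, hcard, hcc, hcl, hnn⟩ := hchk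
  obtain ⟨p, p', hp⟩ := realize h K Z hZ P hPo
    (fun t ht h1 => by simp [hP0 t ht] at h1) (fun t ht h1 => by simp [hP0 t ht] at h1)
  obtain ⟨q, q', hq⟩ := realize h K Z hZ Q hQo hL hD
  obtain ⟨hA, hAc⟩ := fam_of h K hK P hPi p p' hp
  obtain ⟨hB, hBc⟩ := fam_of h K hK Q hQi q q' hq
  refine exchange G hW _ _ hA hB (by omega) ?_
  set A := K ∪ (fun t => s(p t, p' t)) '' (P : Set (Fin 3 × Fin 11)) with hAdef
  have hKA : ∀ u, Dom G K u → Dom G A u := fun u ⟨f, hf, hw⟩ => ⟨f, Or.inl hf, hw⟩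
  -- domination by the family P
  have domc : ∀ i, nearQ P (i, true) → Dom G A (c i) := by
    rintro i ⟨t, ht, hn⟩
    obtain ⟨-, -, -, s1, s2⟩ := hp t ht
    obtain ⟨k, j⟩ := t
    obtain rfl : k = 0 := hP0 _ ht
    rcases hn with hn | hn
    · refine ⟨_, Or.inr ⟨_, ht, rfl⟩, p (0, j), by simp, ?_⟩
      rw [s1.2.2 rfl]
      rcases hn with hn | ⟨-, -, hn⟩
      · exact Or.inl (congrArg c hn)
      · exact Or.inr ((h.adj _ _).2 hn)
    · refine ⟨_, Or.inr ⟨_, ht, rfl⟩, p' (0, j), by simp, ?_⟩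
      rw [s2.2.2 rfl]
      rcases hn with hn | ⟨-, -, hn⟩
      · exact Or.inl (congrArg c hn)
      · exact Or.inr ((h.adj _ _).2 hn)
  have domn : ∀ i z, nearQ P (i, false) → G.Adj (c i) z → Dom G A z := by
    rintro i z ⟨t, ht, hn⟩ hz
    obtain ⟨-, -, -, s1, s2⟩ := hp t ht
    obtain ⟨k, j⟩ := t
    obtain rfl : k = 0 := hP0 _ ht
    rcases hn with hn | hn
    · refine ⟨_, Or.inr ⟨_, ht, rfl⟩, p (0, j), by simp, ?_⟩
      rw [s1.2.2 rfl]
      rcases hn with hn | hn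
      · right; rw [← hn]; exact hz.symm
      · simp at hn
    · refine ⟨_, Or.inr ⟨_, ht, rfl⟩, p' (0, j), by simp, ?_⟩
      rw [s2.2.2 rfl]
      rcases hn with hn | hn
      · right; rw [← hn]; exact hz.symm
      · simp at hn
  intro u v huv hdu
  by_cases hKu : Dom G K u
  · exact Or.inl (hKA u hKu)
  by_cases hKv : Dom G K v
  · exact Or.inr (hKA v hKv)
  have hfam : ∃ t ∈ Q, (u = q t ∨ G.Adj u (q t)) ∨ (u = q' t ∨ G.Adj u (q' t)) := by
    obtain ⟨f, hf | ⟨t, ht, rfl⟩, w, hw, hh⟩ := hdu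
    · exact absurd ⟨f, hf, w, hw, hh⟩ hKu
    · refine ⟨t, ht, ?_⟩
      rcases Sym2.mem_iff.1 hw with rfl | rfl
      · exact Or.inl hh
      · exact Or.inr hh
  have hnear : ∀ a, Sh c ρ u a → nearQ Q a := by
    intro a ha
    obtain ⟨t, ht, hh⟩ := hfam
    obtain ⟨-, -, -, s1, s2⟩ := hq t ht
    exact ⟨t, ht, hh.imp (near_of h ha s1) (near_of h ha s2)⟩
  have hNZ : ∀ i, nearQ P (i, true) ∨ i ∈ Z → Dom G A (c i) := by
    rintro i (hi | hi)
    · exact domc i hi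
    · exact hKA _ (hZ' i hi)
  by_cases hu : u ∈ Set.range c
  · obtain ⟨i, rfl⟩ := hu
    have hn := hnear _ (sh_cyc h i)
    by_cases hv : v ∈ Set.range c
    · obtain ⟨j, rfl⟩ := hv
      rcases hcc i hn with h1 | ⟨h1, h2⟩
      · exact Or.inl (hNZ i h1)
      · rcases (h.adj _ _).1 huv with rfl | rfl
        · exact Or.inr (hNZ _ h1)
        · exact Or.inr (hNZ _ (by simpa using h2))
    · rcases hcl i hn with h1 | h1 | h1
      · exact Or.inl (hNZ _ (Or.inl h1))
      · exact Or.inl (hNZ _ (Or.inr h1))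
      · exact absurd ⟨v, hv, huv, hKv⟩ (hLN i h1)
  · have hn := hnear _ (sh_non hu rfl)
    by_cases hv : v ∈ Set.range c
    · obtain ⟨i, rfl⟩ := hv
      rw [rho_kid h hu huv.symm] at hn
      rcases hcl i (nearQ_mono hn) with h1 | h1 | h1
      · exact Or.inr (hNZ _ (Or.inl h1))
      · exact Or.inr (hNZ _ (Or.inr h1))
      · exact absurd ⟨u, hu, huv.symm, hKu⟩ (hLN i h1)
    · by_cases hku : ∃ i, G.Adj (c i) u
      · obtain ⟨i, hi⟩ := hku
        rw [rho_kid h hu hi] at hn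
        rcases hnn i hn with h1 | h1
        · exact Or.inl (domn i u h1 hi)
        · exact absurd ⟨u, v, hu, hi, hKu, hv, huv, hKv⟩ (hDN i h1)
      · by_cases hkv : ∃ i, G.Adj (c i) v
        · obtain ⟨i, hi⟩ := hkv
          rw [h.edge u v huv hu, rho_kid h hv hi] at hn
          rcases hnn i hn with h1 | h1
          · exact Or.inr (domn i v h1 hi)
          · exact absurd ⟨v, u, hv, hi, hKv, hu, huv.symm, hKu⟩ (hDN i h1)
        · push Not at hku hkv
          rcases hfar with h0 | hfar
          · exfalso
            obtain ⟨⟨k, j⟩, ht, hh⟩ := hfam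
            obtain ⟨-, -, -, s1, s2⟩ := hq _ ht
            obtain rfl : k = 0 := h0 _ ht
            rw [s1.2.2 rfl, s2.2.2 rfl] at hh
            rcases hh with (hh | hh) | (hh | hh)
            · exact hu ⟨_, hh.symm⟩
            · exact hku _ hh.symm
            · exact hu ⟨_, hh.symm⟩
            · exact hku _ hh.symm
          · exact (hfar u v huv hu hv hku hkv).imp (hKA u) (hKA v)

structure Good (G : SimpleGraph V) (c : Fin 11 → V) (K : Set (Sym2 V)) : Prop where
  ind : IsInducedMatching G K
  cyc : ∀ f ∈ K, ∀ u ∈ f, u ∉ Set.range c ∧ ∀ i, ¬ G.Adj (c i) u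
  far : ∀ u v, G.Adj u v → u ∉ Set.range c → v ∉ Set.range c →
      (∀ i, ¬ G.Adj (c i) u) → (∀ i, ¬ G.Adj (c i) v) → Dom G K u ∨ Dom G K v

lemma range_rot (c : Fin 11 → V) (k : Fin 11) :
    Set.range (fun i => c (k + i)) = Set.range c :=
  (Equiv.addLeft k).surjective.range_comp c

lemma Good.rotate {G : SimpleGraph V} {c : Fin 11 → V} {K : Set (Sym2 V)} (h : Good G c K)
    (k : Fin 11) : Good G (fun i => c (k + i)) K := by
  have hs : ∀ u, (∀ i, ¬ G.Adj (c (k + i)) u) → ∀ i, ¬ G.Adj (c i) u := by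
    intro u hu i
    have := hu (i - k)
    rwa [add_sub_cancel] at this
  refine ⟨h.ind, fun f hf u hu => ?_, fun u v huv hu hv hku hkv => ?_⟩
  · rw [range_rot]
    exact ⟨(h.cyc f hf u hu).1, fun i => (h.cyc f hf u hu).2 _⟩
  · rw [range_rot] at hu hv
    exact h.far u v huv hu hv (hs u hku) (hs v hkv)

lemma LL_rot (G : SimpleGraph V) (c : Fin 11 → V) (K : Set (Sym2 V)) (k i : Fin 11) :
    LL G (fun i => c (k + i)) K i ↔ LL G c K (k + i) := by
  unfold LL; rw [range_rot]

lemma DD_rot (G : SimpleGraph V) (c : Fin 11 → V) (K : Set (Sym2 V)) (k i : Fin 11) :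
    DD G (fun i => c (k + i)) K i ↔ DD G c K (k + i) := by
  unfold DD; rw [range_rot]

lemma Good.notDom {G : SimpleGraph V} {c : Fin 11 → V} {K : Set (Sym2 V)} (h : Good G c K)
    (i : Fin 11) : ¬ Dom G K (c i) := by
  rintro ⟨f, hf, w, hw, rfl | hh⟩
  · exact (h.cyc f hf _ hw).1 ⟨i, rfl⟩
  · exact (h.cyc f hf _ hw).2 i hh

lemma exists_good [Finite V] (G : SimpleGraph V) (c : Fin 11 → V) : ∃ K, Good G c K := by
  let S : Set (Set (Sym2 V)) := {K | IsInducedMatching G K ∧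
    ∀ f ∈ K, ∀ u ∈ f, u ∉ Set.range c ∧ ∀ i, ¬ G.Adj (c i) u}
  have h0 : (∅ : Set (Sym2 V)) ∈ S := ⟨⟨by simp, by simp⟩, by simp⟩
  obtain ⟨K, -, hK⟩ := (Set.toFinite S).exists_le_maximal h0
  refine ⟨K, hK.1.1, hK.1.2, fun u v huv hu hv hku hkv => ?_⟩
  by_contra hcon
  push Not at hcon
  have hf := (family G K hK.1.1 (ι := Unit) Finset.univ (fun _ => u) (fun _ => v)
    (fun _ _ => huv) (fun _ _ => hcon) (fun _ _ _ _ hne => absurd rfl hne)).1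
  have hS : K ∪ (fun _ => s(u, v)) '' ((Finset.univ : Finset Unit) : Set Unit) ∈ S := by
    refine ⟨hf, ?_⟩
    rintro f (hfK | ⟨_, _, rfl⟩) w hw
    · exact hK.1.2 f hfK w hw
    · rcases Sym2.mem_iff.1 hw with rfl | rfl
      · exact ⟨hu, hku⟩
      · exact ⟨hv, hkv⟩
  have hle := hK.2 hS Set.subset_union_left
  have : s(u, v) ∈ K := hle (Or.inr ⟨(), by simp, rfl⟩)
  exact hcon.1 ⟨_, this, u, by simp, Or.inl rfl⟩

lemma core_good [Finite V] {G : SimpleGraph V} (hW : WellIndumatched G)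
    {c : Fin 11 → V} {ρ : V → Fin 11} (h : Str G c ρ) {K : Set (Sym2 V)} (hK : Good G c K)
    (P Q : Finset (Fin 3 × Fin 11)) (LN DN : Finset (Fin 11)) (hchk : Chk P Q ∅ LN DN)
    (k : Fin 11) (hLN : ∀ i ∈ LN, ¬ LL G c K (k + i)) (hDN : ∀ i ∈ DN, ¬ DD G c K (k + i))
    (hL : ∀ t ∈ Q, t.1 = 1 → LL G c K (k + t.2)) (hD : ∀ t ∈ Q, t.1 = 2 → DD G c K (k + t.2)) :
    False := by
  refine core hW (h.rotate k) K hK.ind P Q ∅ LN DN hchk (fun i _ => hK.notDom _)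
    (by simp) ?_ ?_ ?_ ?_ (Or.inr (hK.rotate k).far)
  · simpa only [LL_rot] using hLN
  · simpa only [DD_rot] using hDN
  · simpa only [LL_rot] using hL
  · simpa only [DD_rot] using hD

lemma no_DD [Finite V] {G : SimpleGraph V} (hW : WellIndumatched G)
    {c : Fin 11 → V} {ρ : V → Fin 11} (h : Str G c ρ) {K : Set (Sym2 V)} (hK : Good G c K)
    (k : Fin 11) : ¬ DD G c K k := by
  have h2 : ∀ k, DD G c K k → DD G c K (k + 2) := by
    intro k hk
    by_contra hcon
    refine core_good hW h hK _ _ _ _ chk1 k (by simp) (by simpa using hcon) ?_ ?_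
    · simp
    · simpa using hk
  have h1 : ∀ k, DD G c K k → DD G c K (k + 1) → False := by
    intro k hk hk1
    refine core_good hW h hK _ _ _ _ chk2 k (by simp) (by simp) ?_ ?_
    · simp
    · simpa using ⟨hk, hk1⟩
  intro hk
  refine h1 k hk ?_
  have := h2 _ (h2 _ (h2 _ (h2 _ (h2 _ (h2 _ hk)))))
  have e : k + 2 + 2 + 2 + 2 + 2 + 2 = k + 1 := by clear * -; revert k; decide
  rwa [e] at this

lemma no_LL [Finite V] {G : SimpleGraph V} (hW : WellIndumatched G)
    {c : Fin 11 → V} {ρ : V → Fin 11} (h : Str G c ρ) {K : Set (Sym2 V)} (hK : Good G c K)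
    (k : Fin 11) : ¬ LL G c K k := by
  have h0 := no_DD hW h hK
  have h2 : ∀ k, LL G c K k → LL G c K (k + 3) := by
    intro k hk
    by_contra hcon
    refine core_good hW h hK _ _ _ _ chk3 k (by simpa using hcon) (fun i _ => h0 _) ?_ ?_
    · simpa using hk
    · simp
  have h1 : ∀ k, LL G c K k → LL G c K (k + 5) → False := by
    intro k hk hk1
    refine core_good hW h hK _ _ _ _ chk4 k (by simp) (fun i _ => h0 _) ?_ ?_
    · simpa using ⟨hk, hk1⟩
    · simp
  intro hk
  have h6 := h2 _ (h2 _ hk)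
  have e : k + 3 + 3 + 5 = k := by clear * -; revert k; decide
  exact h1 _ h6 (by rwa [e])

lemma no_kid0 [Finite V] {G : SimpleGraph V} (hW : WellIndumatched G)
    {c : Fin 11 → V} {ρ : V → Fin 11} (h : Str G c ρ) {K : Set (Sym2 V)} (hK : Good G c K)
    (x : V) (hx : x ∉ Set.range c) (hax : G.Adj (c 0) x) : False := by
  have hno := no_LL hW h hK
  have hdead : ∀ i z, z ∉ Set.range c → G.Adj (c i) z → Dom G K z := by
    intro i z hz ha
    by_contra hd
    exact hno i ⟨z, hz, ha, hd⟩
  have hρx := rho_kid h hx hax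
  obtain ⟨f, hf, y, hy, rfl | hxy⟩ := hdead 0 x hx hax
  · exact (hK.cyc f hf _ hy).2 0 hax
  obtain ⟨hyc, hyk⟩ := hK.cyc f hf y hy
  have hρy : ρ y = 0 := by rw [← h.edge x y hxy hx, hρx]
  have hKi := (indep_iff G K).1 hK.ind
  let K' : Set (Sym2 V) := {g ∈ K | ∀ w ∈ g, ¬ (x = w ∨ G.Adj x w) ∧ ¬ (y = w ∨ G.Adj y w)}
  have hK' : IsInducedMatching G K' := by
    rw [indep_iff]
    exact ⟨fun g hg => hKi.1 hg.1, fun e he f hf => hKi.2 e he.1 f hf.1⟩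
  have hfam := (family G K' hK' (ι := Unit) Finset.univ (fun _ => x) (fun _ => y)
    (fun _ _ => hxy) (fun _ _ => ⟨fun ⟨g, hg, w, hw, hh⟩ => (hg.2 w hw).1 hh,
      fun ⟨g, hg, w, hw, hh⟩ => (hg.2 w hw).2 hh⟩) (fun _ _ _ _ hne => absurd rfl hne)).1
  set K1 := K' ∪ (fun _ => s(x, y)) '' ((Finset.univ : Finset Unit) : Set Unit) with hK1
  have hmem : s(x, y) ∈ K1 := Or.inr ⟨(), by simp, rfl⟩
  -- vertices below other cycle vertices stay dominated
  have hdead1 : ∀ i, i ≠ 0 → ∀ z, z ∉ Set.range c → G.Adj (c i) z → Dom G K1 z := by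
    intro i hi z hz ha
    obtain ⟨g, hg, w, hw, hzw⟩ := hdead i z hz ha
    refine ⟨g, Or.inl ⟨hg, ?_⟩, w, hw, hzw⟩
    have hρz := rho_kid h hz ha
    have hρw : ρ w = i := by
      rcases hzw with rfl | hzw
      · exact hρz
      · rw [← h.edge z w hzw hz, hρz]
    have hρ : ∀ w' ∈ g, ρ w' = i := by
      obtain ⟨w2, rfl⟩ := Sym2.mem_iff_exists.1 hw
      intro w' hw'
      rcases Sym2.mem_iff.1 hw' with rfl | rfl
      · exact hρw
      · have hadj : G.Adj w w' := hKi.1 hg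
        rw [← h.edge w w' hadj (hK.cyc _ hg w hw).1, hρw]
    intro w' hw'
    have h1 := hρ w' hw'
    constructor
    · rintro (rfl | hh)
      · exact hi (h1.symm.trans hρx)
      · exact hi (h1.symm.trans ((h.edge x w' hh hx).symm.trans hρx))
    · rintro (rfl | hh)
      · exact hi (h1.symm.trans hρy)
      · exact hi (h1.symm.trans ((h.edge y w' hh hyc).symm.trans hρy))
  have hLN : ∀ i, i ≠ 0 → ¬ LL G c K1 i := by
    rintro i hi ⟨z, hz, ha, hd⟩
    exact hd (hdead1 i hi z hz ha)
  have hDN : ∀ i, i ≠ 0 → ¬ DD G c K1 i := by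
    rintro i hi ⟨z, w, hz, ha, hd, -⟩
    exact hd (hdead1 i hi z hz ha)
  refine core hW h K1 hfam _ _ _ _ _ chk5 ?_ ?_ ?_ ?_ ?_ ?_ (Or.inl (by simp))
  · rintro i hi ⟨g, hg | ⟨_, _, rfl⟩, w, hw, hh⟩
    · exact hK.notDom i ⟨g, hg.1, w, hw, hh⟩
    · simp only [Finset.mem_singleton] at hi
      rcases Sym2.mem_iff.1 hw with rfl | rfl
      · rcases hh with hh | hh
        · exact hx ⟨i, hh⟩
        · exact hi ((rho_kid h hx hh).symm.trans hρx)
      · rcases hh with hh | hh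
        · exact hyc ⟨i, hh⟩
        · exact hyk i hh
  · intro i hi
    simp only [Finset.mem_singleton] at hi
    subst hi
    exact ⟨_, hmem, x, by simp, Or.inr hax⟩
  · exact fun i hi => hLN i (by revert i; decide)
  · exact fun i hi => hDN i (by revert i; decide)
  · simp
  · simp

lemma no_kid [Finite V] {G : SimpleGraph V} (hW : WellIndumatched G)
    {c : Fin 11 → V} {ρ : V → Fin 11} (h : Str G c ρ) (k : Fin 11)
    (x : V) (hx : x ∉ Set.range c) : ¬ G.Adj (c k) x := by
  intro hax
  obtain ⟨K, hK⟩ := exists_good G c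
  refine no_kid0 hW (h.rotate k) (hK.rotate k) x ?_ ?_
  · rwa [range_rot]
  · simpa using hax

lemma iso_of_str [Finite V] {G : SimpleGraph V} (hW : WellIndumatched G) (hconn : G.Connected)
    {c : Fin 11 → V} {ρ : V → Fin 11} (h : Str G c ρ) :
    Nonempty (G ≃g SimpleGraph.cycleGraph 11) := by
  have hsurj : Function.Surjective c := by
    intro v
    have hr : ∀ u v, G.Adj u v → u ∈ Set.range c → v ∈ Set.range c := by
      rintro u v huv ⟨i, rfl⟩
      by_contra hv
      exact no_kid hW h i v hv huv
    obtain ⟨p⟩ := hconn.preconnected (c 0) v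
    have : ∀ u v (p : G.Walk u v), u ∈ Set.range c → v ∈ Set.range c := by
      intro u v p
      induction p with
      | nil => exact id
      | cons ha _ ih => exact fun hu => ih (hr _ _ ha hu)
    exact this _ _ p ⟨0, rfl⟩
  have hinj : Function.Injective c := fun i j hij => by
    rw [← h.root i, hij, h.root]
  refine ⟨RelIso.symm ⟨Equiv.ofBijective c ⟨hinj, hsurj⟩, ?_⟩⟩
  intro i j
  change G.Adj (c i) (c j) ↔ _
  rw [h.adj, SimpleGraph.cycleGraph_adj]
  constructor
  · rintro (rfl | rfl) <;> simp
  · rintro (hh | hh)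
    · right; rw [← hh]; abel
    · left; rw [← hh]; abel

lemma exists_str {G : SimpleGraph V} (hconn : G.Connected)
    (v : V) (C : G.Walk v v) (hC : C.IsCycle) (hlen : C.length = 11)
    (huniq : ∀ (w : V) (D : G.Walk w w), D.IsCycle → ∀ e, e ∈ D.edges ↔ e ∈ C.edges) :
    ∃ (c : Fin 11 → V) (ρ : V → Fin 11), Str G c ρ := by
  classical
  let c : Fin 11 → V := fun i => C.getVert i.val
  have hinj : Function.Injective c := by
    intro i j hij
    apply Fin.ext
    refine hC.getVert_injOn' ?_ ?_ hij
    · simp only [Set.mem_ofPred_eq, hlen]; omega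
    · simp only [Set.mem_ofPred_eq, hlen]; omega
  have hsucc : ∀ i : Fin 11, C.getVert (i.val + 1) = c (i + 1) := by
    intro i
    by_cases hi : i.val = 10
    · have h1 : i + 1 = 0 := by apply Fin.ext; simp [Fin.val_add, hi]
      rw [h1, hi]
      have h2 : C.getVert 11 = v := by rw [← hlen]; exact C.getVert_length
      change C.getVert 11 = C.getVert 0
      rw [h2, C.getVert_zero]
    · have h1 : (i + 1).val = i.val + 1 := by
        rw [Fin.val_add]; simp only [Fin.val_one]; omega
      change _ = C.getVert (i + 1).val
      rw [h1]
  have hedge : ∀ i, s(c i, c (i + 1)) ∈ C.edges := by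
    intro i
    rw [C.mk_mem_edges_iff_exists]
    exact ⟨i.val, by omega, by rw [hsucc]⟩
  have hedge' : ∀ a b, s(a, b) ∈ C.edges → ∃ i, s(c i, c (i + 1)) = s(a, b) := by
    intro a b hab
    rw [C.mk_mem_edges_iff_exists] at hab
    obtain ⟨i, hi, hh⟩ := hab
    rw [hlen] at hi
    refine ⟨⟨i, hi⟩, ?_⟩
    rw [← hsucc, ← hh]
  let G' := G.deleteEdges {e | e ∈ C.edges}
  have hG' : ∀ a b, G'.Adj a b ↔ G.Adj a b ∧ s(a, b) ∉ C.edges := by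
    intro a b
    simp [G', SimpleGraph.deleteEdges_adj]
  have hun : ∀ i j, G'.Reachable (c i) (c j) → i = j := by
    intro i j hr
    by_contra hne
    obtain ⟨p, hp⟩ := hr.exists_isPath
    have hcij : c i ≠ c j := fun h => hne (hinj h)
    generalize hb : c j = b at p hcij
    generalize ha : c i = a at p hcij
    cases p with
    | nil => exact hcij rfl
    | @cons _ w _ haw q =>
      rw [SimpleGraph.Walk.cons_isPath_iff] at hp
      obtain ⟨hadj, hnC⟩ := (hG' _ _).1 haw
      have hbr : G.IsBridge s(a, w) := by
        rw [SimpleGraph.isBridge_iff_forall_cycle_notMem hadj]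
        intro u D hD hmem
        exact hnC ((huniq u D hD _).1 hmem)
      rw [SimpleGraph.isBridge_iff] at hbr
      apply hbr
      have hcyc : ∀ n : ℕ, n < 11 →
          (G.deleteEdges {s(a, w)}).Reachable (C.getVert 0) (C.getVert n) := by
        intro n
        induction n with
        | zero => intro _; exact SimpleGraph.Reachable.refl _
        | succ n ih =>
          intro hn
          refine (ih (by omega)).trans (SimpleGraph.Adj.reachable ?_)
          rw [SimpleGraph.deleteEdges_adj]
          refine ⟨C.adj_getVert_succ (by omega), fun hh => hnC ?_⟩
          rw [← Set.mem_singleton_iff.1 hh, C.mk_mem_edges_iff_exists]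
          exact ⟨n, by omega, rfl⟩
      have h1 : (G.deleteEdges {s(a, w)}).Reachable a b := by
        have h2 := (hcyc i i.isLt).symm.trans (hcyc j j.isLt)
        change (G.deleteEdges {s(a, w)}).Reachable (c i) (c j) at h2
        rwa [ha, hb] at h2
      refine h1.trans (SimpleGraph.Reachable.symm ⟨q.transfer _ ?_⟩)
      intro e he
      rw [SimpleGraph.edgeSet_deleteEdges]
      refine ⟨?_, ?_⟩
      · have := q.edges_subset_edgeSet he
        induction e with
        | _ s t => exact ((hG' _ _).1 this).1
      · rintro rfl
        exact hp.2 (q.fst_mem_support_of_mem_edges he)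
  have hex : ∀ u, ∃ i, G'.Reachable u (c i) := by
    intro u
    obtain ⟨p⟩ := hconn.preconnected u (c 0)
    have : ∀ a b (p : G.Walk a b), (∃ i, G'.Reachable b (c i)) → ∃ i, G'.Reachable a (c i) := by
      intro a b p
      induction p with
      | nil => exact id
      | @cons a w _ haw _ ih =>
        intro hb
        obtain ⟨i, hi⟩ := ih hb
        by_cases hm : s(a, w) ∈ C.edges
        · obtain ⟨k, hk⟩ := hedge' _ _ hm
          have : a ∈ s(c k, c (k + 1)) := by rw [hk]; simp
          rcases Sym2.mem_iff.1 this with h | h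
          · exact ⟨k, h ▸ SimpleGraph.Reachable.refl _⟩
          · exact ⟨k + 1, h ▸ SimpleGraph.Reachable.refl _⟩
        · exact ⟨i, (((hG' _ _).2 ⟨haw, hm⟩).reachable).trans hi⟩
    exact this u _ p ⟨0, SimpleGraph.Reachable.refl _⟩
  choose ρ hρ using hex
  refine ⟨c, ρ, fun i j => ?_, fun i => (hun _ _ (hρ (c i))).symm, fun u w huw hu => ?_⟩
  · constructor
    · intro hij
      by_cases hm : s(c i, c j) ∈ C.edges
      · obtain ⟨k, hk⟩ := hedge' _ _ hm
        rcases Sym2.eq_iff.1 hk with ⟨h1, h2⟩ | ⟨h1, h2⟩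
        · left; rw [← hinj h1, ← hinj h2]
        · right; rw [← hinj h1, ← hinj h2]
      · have := hun _ _ ((hG' _ _).2 ⟨hij, hm⟩).reachable
        subst this
        exact absurd hij (G.loopless.irrefl _)
    · rintro (rfl | rfl)
      · exact C.adj_of_mem_edges (hedge i)
      · exact (C.adj_of_mem_edges (hedge j)).symm
  · have hm : s(u, w) ∉ C.edges := by
      intro hm
      obtain ⟨k, hk⟩ := hedge' _ _ hm
      have : u ∈ s(c k, c (k + 1)) := by rw [hk]; simp
      rcases Sym2.mem_iff.1 this with h | h
      · exact hu ⟨k, h.symm⟩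
      · exact hu ⟨k + 1, h.symm⟩
    have hr := ((hG' _ _).2 ⟨huw, hm⟩).reachable
    exact hun _ _ (((hρ u).symm.trans hr).trans (hρ w))

end WIM

/-- Every well-indumatched unicyclic graph whose unique cycle has length `11` is
isomorphic to the cycle `C₁₁`. -/
theorem stmt_16 {V : Type*} [Fintype V] (G : SimpleGraph V)
    (hWIM : WellIndumatched G) (hconn : G.Connected)
    (v : V) (C : G.Walk v v) (hC : C.IsCycle) (hlen : C.length = 11)
    (huniq : ∀ (w : V) (D : G.Walk w w), D.IsCycle → ∀ e, e ∈ D.edges ↔ e ∈ C.edges) :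
    Nonempty (G ≃g SimpleGraph.cycleGraph 11) := by
  obtain ⟨c, ρ, h⟩ := WIM.exists_str hconn v C hC hlen huniq
  exact WIM.iso_of_str hWIM hconn h
end

section
/- For every odd integer g with g ≥ 9 and g ≠ 11, there is no well-indumatched graph of girth g. -/
open SimpleGraph

section Helpers

variable {V : Type*}

lemma IM.extend [Finite V] {G : SimpleGraph V} {A : Set (Sym2 V)} (hA : IsInducedMatching G A) :
    ∃ M, IsMaximalInducedMatching G M ∧ A ⊆ M := by
  obtain ⟨M, hAM, hM⟩ := (Set.toFinite {M : Set (Sym2 V) | IsInducedMatching G M}).exists_le_maximal hA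
  refine ⟨M, ⟨hM.1, fun N hN hMN => ?_⟩, hAM⟩
  exact Set.Subset.antisymm (hM.2 hN hMN) hMN

lemma IM.key [Finite V] {G : SimpleGraph V} {A B : Set (Sym2 V)} (hA : IsInducedMatching G A)
    (hB : IsInducedMatching G B) (hlt : A.ncard < B.ncard)
    (h : ∀ f ∈ B, ∀ t ∈ f, ∀ w z, G.Adj w z → (w = t ∨ G.Adj t w) →
      ∃ e ∈ A, ∃ a ∈ e, (a = w ∨ G.Adj a w) ∨ (a = z ∨ G.Adj a z)) : ¬ WellIndumatched G := by
  intro hW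
  obtain ⟨M, hM, hAM⟩ := IM.extend hA
  have hcompat : ∀ f ∈ M \ A, ∀ e ∈ B, ∀ u ∈ f, ∀ v ∈ e, u ≠ v ∧ ¬ G.Adj u v := by
    intro f hf e he u hu v hv
    by_contra hcon
    have hc : u = v ∨ G.Adj v u := by
      by_contra h'
      push Not at h'
      exact hcon ⟨h'.1, fun h2 => h'.2 h2.symm⟩
    obtain ⟨z, rfl⟩ := Sym2.mem_iff_exists.1 hu
    have huz : G.Adj u z := hM.1.1 hf.1
    obtain ⟨e', he', a, ha, h1⟩ := h e he v hv u z huz hc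
    have hne : e' ≠ s(u, z) := fun h' => hf.2 (h' ▸ he')
    have k1 := hM.1.2 e' (hAM he') _ hf.1 hne a ha u (by simp)
    have k2 := hM.1.2 e' (hAM he') _ hf.1 hne a ha z (by simp)
    tauto
  have hdisj : Disjoint (M \ A) B := by
    rw [Set.disjoint_left]
    intro f hf hfB
    induction f using Sym2.ind with
    | _ u v => exact (hcompat _ hf _ hfB u (by simp) u (by simp)).1 rfl
  have hIM : IsInducedMatching G ((M \ A) ∪ B) := by
    refine ⟨?_, ?_⟩
    · rintro e (he | he)
      · exact hM.1.1 he.1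
      · exact hB.1 he
    · rintro e (he | he) f (hf | hf) hne u hu v hv
      · exact hM.1.2 e he.1 f hf.1 hne u hu v hv
      · exact hcompat e he f hf u hu v hv
      · have := hcompat f hf e he v hv u hu
        exact ⟨this.1.symm, fun h' => this.2 h'.symm⟩
      · exact hB.2 e he f hf hne u hu v hv
  obtain ⟨N, hN, hsub⟩ := IM.extend hIM
  have h1 := Set.ncard_le_ncard hsub (Set.toFinite _)
  rw [Set.ncard_union_eq hdisj (Set.toFinite _) (Set.toFinite _)] at h1
  have h2 := Set.ncard_sdiff_add_ncard_of_subset hAM (Set.toFinite _)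
  have h3 := hW M N hM hN
  omega

lemma IM.single {G : SimpleGraph V} {u v : V} (h : G.Adj u v) :
    IsInducedMatching G {s(u, v)} := by
  refine ⟨by simpa using h, ?_⟩
  intro e he f hf hne
  exact absurd (he.trans hf.symm) hne

lemma IM.insert {G : SimpleGraph V} {u v : V} {M : Set (Sym2 V)} (hM : IsInducedMatching G M)
    (h : G.Adj u v)
    (hc : ∀ f ∈ M, ∀ a ∈ f, (u ≠ a ∧ ¬ G.Adj u a) ∧ (v ≠ a ∧ ¬ G.Adj v a)) :
    IsInducedMatching G (Insert.insert s(u, v) M) := by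
  refine ⟨Set.insert_subset h hM.1, ?_⟩
  have key : ∀ f ∈ M, ∀ a ∈ s(u, v), ∀ b ∈ f, a ≠ b ∧ ¬ G.Adj a b := by
    intro f hf a ha b hb
    rcases Sym2.mem_iff.1 ha with rfl | rfl
    · exact (hc f hf b hb).1
    · exact (hc f hf b hb).2
  rintro e (rfl | he) f (rfl | hf) hne a ha b hb
  · exact absurd rfl hne
  · exact key f hf a ha b hb
  · have := key e he b hb a ha
    exact ⟨this.1.symm, fun h' => this.2 h'.symm⟩
  · exact hM.2 e he f hf hne a ha b hb

/-- Residual graph: keep only edges inside `U`. -/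
def resG (G : SimpleGraph V) (U : Set V) : SimpleGraph V where
  Adj u v := G.Adj u v ∧ u ∈ U ∧ v ∈ U
  symm := ⟨fun _ _ h => ⟨h.1.symm, h.2.2, h.2.1⟩⟩
  loopless := ⟨fun _ h => G.loopless.irrefl _ h.1⟩

def surv (G : SimpleGraph V) (K : Set (Sym2 V)) : Set V :=
  {u | ∀ e ∈ K, ∀ a ∈ e, u ≠ a ∧ ¬ G.Adj u a}

lemma WI.res [Finite V] {G : SimpleGraph V} {K : Set (Sym2 V)} (hK : IsInducedMatching G K)
    (hW : WellIndumatched G) : WellIndumatched (resG G (surv G K)) := by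
  have hU : ∀ M, IsInducedMatching (resG G (surv G K)) M → ∀ e ∈ M, ∀ u ∈ e, u ∈ surv G K := by
    intro M hM e he u hu
    obtain ⟨z, rfl⟩ := Sym2.mem_iff_exists.1 hu
    have : (resG G (surv G K)).Adj u z := hM.1 he
    exact this.2.1
  have hdisj : ∀ M, IsInducedMatching (resG G (surv G K)) M → Disjoint M K := by
    intro M hM
    rw [Set.disjoint_left]
    intro f hf hfK
    induction f using Sym2.ind with
    | _ u v => exact (hU M hM _ hf u (by simp) _ hfK u (by simp)).1 rfl
  have main : ∀ M, IsMaximalInducedMatching (resG G (surv G K)) M →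
      IsMaximalInducedMatching G (M ∪ K) := by
    intro M hM
    refine ⟨⟨?_, ?_⟩, ?_⟩
    · rintro e (he | he)
      · induction e using Sym2.ind with
        | _ u v =>
          have : (resG G (surv G K)).Adj u v := hM.1.1 he
          exact this.1
      · exact hK.1 he
    · rintro e (he | he) f (hf | hf) hne u hu v hv
      · have := hM.1.2 e he f hf hne u hu v hv
        exact ⟨this.1, fun h => this.2 ⟨h, hU M hM.1 e he u hu, hU M hM.1 f hf v hv⟩⟩
      · exact hU M hM.1 e he u hu f hf v hv
      · have := hU M hM.1 f hf v hv e he u hu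
        exact ⟨this.1.symm, fun h => this.2 h.symm⟩
      · exact hK.2 e he f hf hne u hu v hv
    · intro N hN hsub
      have hNK : IsInducedMatching (resG G (surv G K)) (N \ K) := by
        have hs : ∀ e ∈ N \ K, ∀ u ∈ e, u ∈ surv G K := by
          intro e he u hu f hf a ha
          exact hN.2 e he.1 f (hsub (Or.inr hf)) (fun h => he.2 (h ▸ hf)) u hu a ha
        refine ⟨?_, ?_⟩
        · intro e he
          have h1 := hs e he
          have h2 := hN.1 he.1
          induction e using Sym2.ind with
          | _ u v => exact ⟨h2, h1 u (by simp), h1 v (by simp)⟩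
        · intro e he f hf hne u hu v hv
          have := hN.2 e he.1 f hf.1 hne u hu v hv
          exact ⟨this.1, fun h => this.2 h.1⟩
      have := hM.2 _ hNK (by
        intro e he
        exact ⟨hsub (Or.inl he), fun h => Set.disjoint_left.1 (hdisj M hM.1) he h⟩)
      rw [← this, Set.sdiff_union_of_subset]
      exact fun e he => hsub (Or.inr he)
  intro M N hM hN
  have h := hW _ _ (main M hM) (main N hN)
  rw [Set.ncard_union_eq (hdisj M hM.1) (Set.toFinite _) (Set.toFinite _),
    Set.ncard_union_eq (hdisj N hN.1) (Set.toFinite _) (Set.toFinite _)] at h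
  omega

lemma short_cycle {G : SimpleGraph V} {g : ℕ}
    (hg : ∀ (v : V) (w : G.Walk v v), w.IsCycle → g ≤ w.length) {x y : V} (h : G.Adj x y)
    (w : G.Walk y x) (hw : s(x, y) ∉ w.edges) : g ≤ w.length + 1 := by
  classical
  have hc : (Walk.cons h w.bypass).IsCycle := by
    rw [Walk.cons_isCycle_iff]
    exact ⟨w.bypass_isPath, fun h' => hw (w.edges_bypass_subset_edges h')⟩
  have h1 := hg _ _ hc
  have h2 := w.length_bypass_le_length
  simp only [Walk.length_cons] at h1
  omega

lemma arc {G : SimpleGraph V} {c : ℤ → V} (hadj : ∀ i, G.Adj (c i) (c (i + 1))) (n : ℕ) :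
    ∀ i : ℤ, ∃ w : G.Walk (c i) (c (i + n)), w.length = n ∧
      ∀ e ∈ w.edges, ∃ k, e = s(c k, c (k + 1)) := by
  induction n with
  | zero =>
    intro i
    have : c i = c (i + (0 : ℕ)) := by simp
    exact ⟨Walk.nil.copy rfl this, by simp, by simp⟩
  | succ n ih =>
    intro i
    obtain ⟨w, hw, hwe⟩ := ih (i + 1)
    have : c (i + 1 + n) = c (i + (n + 1 : ℕ)) := by congr 1; push_cast; ring
    refine ⟨Walk.cons (hadj i) (w.copy rfl this), by simp [hw], ?_⟩
    intro e he
    simp only [Walk.edges_cons, Walk.edges_copy, List.mem_cons] at he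
    rcases he with rfl | he
    · exact ⟨i, rfl⟩
    · exact hwe e he

lemma short_arc {G : SimpleGraph V} {c : ℤ → V} {g : ℕ} (hodd : Odd g) 
    (hadj : ∀ i, G.Adj (c i) (c (i + 1)))
    (hc : ∀ i j, c i = c j ↔ (g : ℤ) ∣ i - j) (i j : ℤ) :
    ∃ w : G.Walk (c i) (c j), 2 * w.length + 1 ≤ g ∧
      ∀ e ∈ w.edges, ∃ k, e = s(c k, c (k + 1)) := by
  obtain ⟨m, hm⟩ := hodd
  have hgpos : (0 : ℤ) < g := by omega
  have h0 := Int.emod_nonneg (j - i) hgpos.ne'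
  have h1 := Int.emod_lt_of_pos (j - i) hgpos
  have h2 := Int.emod_add_mul_ediv (j - i) g
  by_cases hr : (j - i) % g ≤ m
  · obtain ⟨w, hw, hwe⟩ := arc hadj ((j - i) % g).toNat i
    have : c (i + ((j - i) % g).toNat) = c j := by
      rw [hc]
      refine ⟨-((j - i) / g), ?_⟩
      rw [Int.toNat_of_nonneg h0]
      linarith
    refine ⟨w.copy rfl this, ?_, by simpa using hwe⟩
    simp only [Walk.length_copy, hw]
    omega
  · obtain ⟨w, hw, hwe⟩ := arc hadj (g - (j - i) % g).toNat j
    have : c (j + ((g - (j - i) % g).toNat : ℤ)) = c i := by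
      rw [hc]
      refine ⟨1 + (j - i) / g, ?_⟩
      rw [Int.toNat_of_nonneg (by omega)]
      linarith
    refine ⟨(w.copy rfl this).reverse, ?_, by simpa using hwe⟩
    simp only [Walk.length_reverse, Walk.length_copy, hw]
    omega

end Helpers

section Core

variable {V : Type*}

structure Cyc (G : SimpleGraph V) (g : ℕ) (c : ℤ → V) : Prop where
  hodd : Odd g
  h9 : 9 ≤ g
  adj : ∀ i, G.Adj (c i) (c (i + 1))
  hc : ∀ i j, c i = c j ↔ (g : ℤ) ∣ i - j
  girth : ∀ (v : V) (w : G.Walk v v), w.IsCycle → g ≤ w.length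
  cov : ∀ u v, G.Adj u v → (∃ i, u = c i ∨ G.Adj u (c i)) ∨ (∃ i, v = c i ∨ G.Adj v (c i))

namespace Cyc

variable {G : SimpleGraph V} {g : ℕ} {c : ℤ → V}

lemma ne (H : Cyc G g c) {i j : ℤ} (h0 : i ≠ j) (h1 : i - j < g) (h2 : j - i < g) :
    c i ≠ c j := by
  intro h
  rw [H.hc] at h
  have := Int.eq_zero_of_abs_lt_dvd h (by rw [abs_lt]; omega)
  omega

lemma adj_iff (H : Cyc G g c) {i j : ℤ} (h : G.Adj (c i) (c j)) :
    c i = c (j + 1) ∨ c i = c (j - 1) := by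
  obtain ⟨w, hw, hwe⟩ := short_arc H.hodd H.adj H.hc j i
  by_cases hm : s(c i, c j) ∈ w.edges
  · obtain ⟨k, hk⟩ := hwe _ hm
    rcases Sym2.eq_iff.1 hk with ⟨h1, h2⟩ | ⟨h1, h2⟩
    · right
      rw [h1]
      rw [H.hc] at h2 ⊢
      obtain ⟨d, hd⟩ := h2
      exact ⟨-d, by linarith⟩
    · left
      rw [h1]
      rw [H.hc] at h2 ⊢
      obtain ⟨d, hd⟩ := h2
      exact ⟨-d, by linarith⟩
  · have := short_cycle H.girth h w hm
    have := H.h9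
    omega

lemma far (H : Cyc G g c) {i j : ℤ} (h0 : 2 ≤ |i - j|) (h1 : |i - j| + 2 ≤ g) :
    c i ≠ c j ∧ ¬ G.Adj (c i) (c j) := by
  have h9 := H.h9
  have h3 : i - j ≤ -2 ∨ 2 ≤ i - j := by
    rcases abs_cases (i - j) with h | h <;> omega
  have h4 : i - j ≤ g - 2 ∧ j - i ≤ g - 2 := by
    rcases abs_cases (i - j) with h | h <;> omega
  refine ⟨H.ne (by omega) (by omega) (by omega), fun h => ?_⟩
  rcases H.adj_iff h with h | h
  · exact H.ne (by omega) (by omega) (by omega) h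
  · exact H.ne (by omega) (by omega) (by omega) h

lemma out (H : Cyc G g c) {x : V} {i j : ℤ} (hx : ∀ k, x ≠ c k) (h : G.Adj (c i) x)
    (w : G.Walk x (c j)) (hw : s(c i, x) ∉ w.edges) (hl : w.length ≤ 3) : False := by
  obtain ⟨a, ha, hae⟩ := short_arc H.hodd H.adj H.hc j i
  have := short_cycle H.girth h (w.append a) (by
    rw [Walk.edges_append, List.mem_append]
    rintro (h' | h')
    · exact hw h'
    · obtain ⟨k, hk⟩ := hae _ h'
      rcases Sym2.eq_iff.1 hk with ⟨h1, h2⟩ | ⟨h1, h2⟩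
      · exact hx _ h2
      · exact hx _ h2)
  rw [Walk.length_append] at this
  have := H.h9
  omega

lemma child_unique (H : Cyc G g c) {x : V} {i j : ℤ} (hx : ∀ k, x ≠ c k) (h : G.Adj (c i) x)
    (h' : G.Adj (c j) x) : c i = c j := by
  by_contra hne
  refine H.out hx h (Walk.cons h'.symm Walk.nil) ?_ (by simp)
  have := hx i
  have := hx j
  simp only [Walk.edges_cons, Walk.edges_nil, List.mem_singleton, Sym2.eq_iff]
  grind

lemma nonadj (H : Cyc G g c) {x y : V} {i j : ℤ} (hx : ∀ k, x ≠ c k) (hy : ∀ k, y ≠ c k)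
    (h : G.Adj (c i) x) (h' : G.Adj (c j) y) : ¬ G.Adj x y := by
  intro hxy
  refine H.out hx h (Walk.cons hxy (Walk.cons h'.symm Walk.nil)) ?_ (by simp)
  have := hx i
  have := hx j
  have := hy i
  have := hy j
  have := hxy.ne
  simp only [Walk.edges_cons, Walk.edges_nil, Sym2.eq_iff, List.mem_cons]
  grind

lemma leaf (H : Cyc G g c) {x y : V} {i : ℤ} (hx : ∀ k, x ≠ c k) (h : G.Adj (c i) x)
    (hxy : G.Adj x y) (hy : y ≠ c i) : (∀ k, y ≠ c k) ∧ ∀ z, G.Adj y z → z = x := by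
  have hy' : ∀ k, y ≠ c k := by
    rintro k rfl
    exact hy (H.child_unique hx hxy.symm h)
  refine ⟨hy', fun z hyz => ?_⟩
  by_contra hzx
  rcases H.cov y z hyz with ⟨j, h1 | h1⟩ | ⟨j, h1 | h1⟩
  · exact hy' _ h1
  · exact H.nonadj hx hy' h h1.symm hxy
  · subst h1
    exact H.nonadj hx hy' h hyz.symm hxy
  · by_cases hz : ∃ k, z = c k
    · obtain ⟨k, rfl⟩ := hz
      exact H.nonadj hx hy' h hyz.symm hxy
    push Not at hz
    refine H.out hx h (Walk.cons hxy (Walk.cons hyz (Walk.cons h1 Walk.nil))) ?_ (by simp)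
    have := hx i
    have := hz i
    have := hy' i
    have := hxy.ne
    simp only [Walk.edges_cons, Walk.edges_nil, Sym2.eq_iff, List.mem_cons]
    grind

lemma nbr (H : Cyc G g c) {w : V} {j : ℤ} (h : G.Adj (c j) w) :
    w = c (j + 1) ∨ w = c (j - 1) ∨ ∀ k, w ≠ c k := by
  by_cases hz : ∃ k, w = c k
  · obtain ⟨k, rfl⟩ := hz
    rcases H.adj_iff h.symm with h | h
    · exact Or.inl h
    · exact Or.inr (Or.inl h)
  · push Not at hz
    exact Or.inr (Or.inr hz)

/-- `x y` is a pendant path hanging at `c i`. -/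
def Pend (G : SimpleGraph V) (c : ℤ → V) (i : ℤ) (x y : V) : Prop :=
  (∀ k, x ≠ c k) ∧ G.Adj (c i) x ∧ G.Adj x y ∧ y ≠ c i

lemma bdom (H : Cyc G g c) {i : ℤ} {x y : V} (hp : Pend G c i x y) {t w z : V}
    (ht : t ∈ s(x, y)) (hwz : G.Adj w z) (hw : w = t ∨ G.Adj t w) :
    (c i = w ∨ G.Adj (c i) w) ∨ (c i = z ∨ G.Adj (c i) z) := by
  obtain ⟨hx, hix, hxy, hy⟩ := hp
  have key : ∀ w, G.Adj x w → G.Adj w z →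
      (c i = w ∨ G.Adj (c i) w) ∨ (c i = z ∨ G.Adj (c i) z) := by
    intro w hxw hwz
    by_cases hwi : w = c i
    · exact Or.inl (Or.inl hwi.symm)
    · have := (H.leaf hx hix hxw hwi).2 z hwz
      subst this
      exact Or.inr (Or.inr hix)
  rcases Sym2.mem_iff.1 ht with rfl | rfl
  · rcases hw with rfl | hw
    · exact Or.inl (Or.inr hix)
    · exact key w hw hwz
  · rcases hw with rfl | hw
    · exact key w hxy hwz
    · have := (H.leaf hx hix hxy hy).2 w hw
      subst this
      exact Or.inl (Or.inr hix)

lemma pend_far (H : Cyc G g c) {i j : ℤ} {x y : V} (hp : Pend G c i x y) (hij : c i ≠ c j) :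
    (x ≠ c j ∧ ¬ G.Adj x (c j)) ∧ (y ≠ c j ∧ ¬ G.Adj y (c j)) := by
  obtain ⟨hx, hix, hxy, hy⟩ := hp
  obtain ⟨h1, h2⟩ := H.leaf hx hix hxy hy
  refine ⟨⟨hx j, fun h => hij (H.child_unique hx hix h.symm)⟩, h1 j, fun h => ?_⟩
  exact hx j (h2 _ h).symm

lemma pend_pend (H : Cyc G g c) {i j : ℤ} {x y x' y' : V} (hp : Pend G c i x y)
    (hp' : Pend G c j x' y') (hij : c i ≠ c j) :
    ((x ≠ x' ∧ ¬ G.Adj x x') ∧ (y ≠ x' ∧ ¬ G.Adj y x')) ∧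
    ((x ≠ y' ∧ ¬ G.Adj x y') ∧ (y ≠ y' ∧ ¬ G.Adj y y')) := by
  obtain ⟨hx, hix, hxy, hy⟩ := hp
  obtain ⟨h1, h2⟩ := H.leaf hx hix hxy hy
  obtain ⟨hx', hix', hxy', hy'⟩ := hp'
  obtain ⟨h1', h2'⟩ := H.leaf hx' hix' hxy' hy'
  have hne : x ≠ x' := by
    rintro rfl
    exact hij (H.child_unique hx hix hix')
  have hxy1 : x ≠ y' := by
    rintro rfl
    exact hx' i (h2' _ hix.symm).symm
  have hyx1 : y ≠ x' := by
    rintro rfl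
    exact hx j (h2 _ hix'.symm).symm
  refine ⟨⟨⟨hne, H.nonadj hx hx' hix hix'⟩, hyx1, fun h => hne (h2 _ h).symm⟩,
    ⟨hxy1, fun h => hne (h2' _ h.symm)⟩, ?_, fun h => hxy1 (h2 _ h).symm⟩
  rintro rfl
  exact hne (h2' _ hxy.symm)

lemma not_adjacent_pend [Finite V] (H : Cyc G g c) (hW : WellIndumatched G) {i : ℤ} {x y x' y' : V}
    (hp : Pend G c i x y) (hp' : Pend G c (i + 1) x' y') : False := by
  have hpp := H.pend_pend hp hp' (H.adj i).ne
  have hne : s(x, y) ≠ s(x', y') := by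
    rw [Ne, Sym2.eq_iff]
    grind
  refine IM.key (A := {s(c i, c (i + 1))}) (B := {s(x, y), s(x', y')}) (IM.single (H.adj i))
    (IM.insert (IM.single hp'.2.2.1) hp.2.2.1 ?_) ?_ ?_ hW
  · intro f hf a ha
    rw [Set.mem_singleton_iff] at hf
    subst hf
    rcases Sym2.mem_iff.1 ha with rfl | rfl
    · exact hpp.1
    · exact hpp.2
  · rw [Set.ncard_singleton, Set.ncard_pair hne]
    omega
  · intro f hf t ht w z hwz hw
    refine ⟨_, rfl, ?_⟩
    rcases hf with rfl | rfl
    · exact ⟨c i, by simp, H.bdom hp ht hwz hw⟩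
    · exact ⟨c (i + 1), by simp, H.bdom hp' ht hwz hw⟩

/-- Domination of everything around `c (i+2)`. -/
lemma dom2 (H : Cyc G g c) {i : ℤ} (hn : ¬ ∃ x y, Pend G c (i + 2) x y) {A : Set (Sym2 V)}
    {e1 e2 : Sym2 V} (h1 : e1 ∈ A) (h1' : c (i + 1) ∈ e1) (h2 : e2 ∈ A) (h2' : c (i + 4) ∈ e2)
    {w z : V} (hwz : G.Adj w z) (hw : w = c (i + 2) ∨ G.Adj (c (i + 2)) w) :
    ∃ e ∈ A, ∃ a ∈ e, (a = w ∨ G.Adj a w) ∨ (a = z ∨ G.Adj a z) := by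
  have ha : G.Adj (c (i + 1)) (c (i + 2)) := by
    have := H.adj (i + 1)
    rwa [show i + 1 + 1 = i + 2 by ring] at this
  rcases hw with rfl | hw
  · exact ⟨e1, h1, _, h1', Or.inl (Or.inr ha)⟩
  · rcases H.nbr hw with rfl | rfl | hw'
    · refine ⟨e2, h2, _, h2', Or.inl (Or.inr ?_)⟩
      have := (H.adj (i + 3)).symm
      rwa [show i + 3 + 1 = i + 4 by ring, show i + 3 = i + 2 + 1 by ring] at this
    · refine ⟨e1, h1, _, h1', Or.inl (Or.inl ?_)⟩
      congr 1
      ring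
    · refine ⟨e1, h1, _, h1', Or.inr (Or.inr ?_)⟩
      have : z = c (i + 2) := by
        by_contra hz
        exact hn ⟨w, z, hw', hw, hwz, hz⟩
      rwa [this]

lemma adj12 (H : Cyc G g c) (i : ℤ) : G.Adj (c (i + 1)) (c (i + 2)) := by
  have := H.adj (i + 1)
  rwa [show i + 1 + 1 = i + 2 by ring] at this

lemma adj45 (H : Cyc G g c) (i : ℤ) : G.Adj (c (i + 4)) (c (i + 5)) := by
  have := H.adj (i + 4)
  rwa [show i + 4 + 1 = i + 5 by ring] at this

lemma self_dom {A : Set (Sym2 V)} {e : Sym2 V} (he : e ∈ A) {t w z : V} (ht : t ∈ e)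
    (hw : w = t ∨ G.Adj t w) :
    ∃ e ∈ A, ∃ a ∈ e, (a = w ∨ G.Adj a w) ∨ (a = z ∨ G.Adj a z) :=
  ⟨e, he, t, ht, Or.inl (hw.imp Eq.symm id)⟩

lemma compat_of {u v a b : V} {f : Sym2 V} (hf : f = s(a, b))
    (h1 : u ≠ a ∧ ¬ G.Adj u a) (h2 : v ≠ a ∧ ¬ G.Adj v a)
    (h3 : u ≠ b ∧ ¬ G.Adj u b) (h4 : v ≠ b ∧ ¬ G.Adj v b) :
    ∀ a ∈ f, (u ≠ a ∧ ¬ G.Adj u a) ∧ (v ≠ a ∧ ¬ G.Adj v a) := by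
  subst hf
  intro x hx
  rcases Sym2.mem_iff.1 hx with rfl | rfl
  · exact ⟨h1, h2⟩
  · exact ⟨h3, h4⟩

lemma ne_edge {u v a b : V} (h1 : u ≠ a) (h2 : u ≠ b) : s(u, v) ≠ s(a, b) := by
  rw [Ne, Sym2.eq_iff]
  grind

/-- Index difference is a concrete integer: `c i` and `c j` are distinct and nonadjacent. -/
lemma far' (H : Cyc G g c) {i j : ℤ} (d : ℤ) (h : i - j = d ∨ j - i = d) (h0 : 2 ≤ d)
    (h1 : d + 2 ≤ g) : c i ≠ c j ∧ ¬ G.Adj (c i) (c j) := by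
  have : |i - j| = d := by
    rcases h with h | h
    · rw [h, abs_of_nonneg (by omega)]
    · rw [abs_sub_comm, h, abs_of_nonneg (by omega)]
  exact H.far (by omega) (by omega)

lemma case3 [Finite V] (H : Cyc G g c) (hW : WellIndumatched G) {i : ℤ} {x y : V}
    (hp : Pend G c i x y) (hn1 : ¬ ∃ x y, Pend G c (i + 1) x y)
    (hn : ¬ ∃ x y, Pend G c (i + 2) x y) : False := by
  have h9 := H.h9
  have p1 := H.pend_far hp (j := i + 1) (H.adj i).ne
  have p2 := H.pend_far hp (j := i + 2) (H.ne (by omega) (by omega) (by omega))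
  have p4 := H.pend_far hp (j := i + 4) (H.ne (by omega) (by omega) (by omega))
  have p5 := H.pend_far hp (j := i + 5) (H.ne (by omega) (by omega) (by omega))
  have hI : IsInducedMatching G {s(c (i + 4), c (i + 5))} := IM.single (H.adj45 i)
  refine IM.key (A := {s(c i, c (i + 1)), s(c (i + 4), c (i + 5))})
    (B := {s(x, y), s(c (i + 1), c (i + 2)), s(c (i + 4), c (i + 5))})
    (IM.insert hI (H.adj i) ?_) (IM.insert (IM.insert hI (H.adj12 i) ?_) hp.2.2.1 ?_) ?_ ?_ hW
  · intro f hf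
    refine compat_of hf (H.far' 4 ?_ ?_ ?_) (H.far' 3 ?_ ?_ ?_) (H.far' 5 ?_ ?_ ?_)
      (H.far' 4 ?_ ?_ ?_) <;> omega
  · intro f hf
    refine compat_of hf (H.far' 3 ?_ ?_ ?_) (H.far' 2 ?_ ?_ ?_) (H.far' 4 ?_ ?_ ?_)
      (H.far' 3 ?_ ?_ ?_) <;> omega
  · intro f hf
    rcases hf with hf | hf
    · exact compat_of hf p1.1 p1.2 p2.1 p2.2
    · exact compat_of hf p4.1 p4.2 p5.1 p5.2
  · have e1 : s(x, y) ≠ s(c (i + 1), c (i + 2)) := ne_edge p1.1.1 p2.1.1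
    have e2 : s(x, y) ≠ s(c (i + 4), c (i + 5)) := ne_edge p4.1.1 p5.1.1
    have e3 : s(c (i + 1), c (i + 2)) ≠ s(c (i + 4), c (i + 5)) :=
      ne_edge (H.ne (by omega) (by omega) (by omega)) (H.ne (by omega) (by omega) (by omega))
    rw [Set.ncard_insert_of_notMem (a := s(x, y))
      (by simp only [Set.mem_insert_iff, Set.mem_singleton_iff]; tauto), Set.ncard_pair e3]
    have := Set.ncard_insert_le s(c i, c (i + 1)) {s(c (i + 4), c (i + 5))}
    rw [Set.ncard_singleton] at this
    omega
  · intro f hf t ht w z hwz hw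
    rcases hf with rfl | rfl | rfl
    · exact ⟨_, Or.inl rfl, c i, by simp, H.bdom hp ht hwz hw⟩
    · rcases Sym2.mem_iff.1 ht with rfl | rfl
      · exact self_dom (Or.inl rfl) (by simp) hw
      · exact H.dom2 hn (Or.inl rfl) (by simp) (Or.inr rfl) (by simp) hwz hw
    · exact self_dom (Or.inr rfl) ht hw

lemma no_pend [Finite V] (H : Cyc G g c) (hW : WellIndumatched G) (i : ℤ) :
    ¬ ∃ x y, Pend G c i x y := by
  intro h
  have step : ∀ i, (∃ x y, Pend G c i x y) → ∃ x y, Pend G c (i + 2) x y := by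
    rintro i ⟨x, y, hp⟩
    by_contra hn
    refine H.case3 hW hp ?_ hn
    rintro ⟨x', y', hp'⟩
    exact H.not_adjacent_pend hW hp hp'
  have all : ∀ n : ℕ, ∃ x y, Pend G c (i + 2 * n) x y := by
    intro n
    induction n with
    | zero => simpa using h
    | succ n ih =>
      have := step _ ih
      rwa [show i + 2 * (n : ℤ) + 2 = i + 2 * ((n + 1 : ℕ) : ℤ) by push_cast; ring] at this
  obtain ⟨m, hm⟩ := H.hodd
  obtain ⟨x', y', hp'⟩ := all (m + 1)
  obtain ⟨x, y, hp⟩ := h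
  have : c (i + 2 * ((m + 1 : ℕ) : ℤ)) = c (i + 1) := by
    rw [H.hc]
    refine ⟨1, ?_⟩
    rw [hm]
    push_cast
    ring
  refine H.not_adjacent_pend hW hp (x' := x') (y' := y') ?_
  unfold Pend at hp' ⊢
  rwa [this] at hp'

lemma case4b [Finite V] (H : Cyc G g c) (hW : WellIndumatched G) {i : ℤ} {x x' : V}
    (hx : ∀ k, x ≠ c k) (hix : G.Adj (c i) x) (hx' : ∀ k, x' ≠ c k)
    (hix' : G.Adj (c (i + 2)) x') : False := by
  have h9 := H.h9
  have cu : ∀ j, c i ≠ c j → ¬ G.Adj x (c j) := fun j hj h => hj (H.child_unique hx hix h.symm)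
  have cu' : ∀ j, c (i + 2) ≠ c j → ¬ G.Adj x' (c j) :=
    fun j hj h => hj (H.child_unique hx' hix' h.symm)
  have hI : IsInducedMatching G {s(c (i + 4), c (i + 5))} := IM.single (H.adj45 i)
  have f02 := H.far' (i := i) (j := i + 2) 2 (by omega) (by omega) (by omega)
  have f04 := H.far' (i := i) (j := i + 4) 4 (by omega) (by omega) (by omega)
  have f05 := H.far' (i := i) (j := i + 5) 5 (by omega) (by omega) (by omega)
  have f24 := H.far' (i := i + 2) (j := i + 4) 2 (by omega) (by omega) (by omega)
  have f25 := H.far' (i := i + 2) (j := i + 5) 3 (by omega) (by omega) (by omega)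
  have hxx : x ≠ x' := by
    rintro rfl
    exact f02.1 (H.child_unique hx hix hix')
  refine IM.key (A := {s(c i, c (i + 1)), s(c (i + 4), c (i + 5))})
    (B := {s(c i, x), s(c (i + 2), x'), s(c (i + 4), c (i + 5))})
    (IM.insert hI (H.adj i) ?_) (IM.insert (IM.insert hI hix' ?_) hix ?_) ?_ ?_ hW
  · intro f hf
    refine compat_of hf (H.far' 4 ?_ ?_ ?_) (H.far' 3 ?_ ?_ ?_) (H.far' 5 ?_ ?_ ?_)
      (H.far' 4 ?_ ?_ ?_) <;> omega
  · intro f hf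
    exact compat_of hf f24 ⟨hx' _, cu' _ f24.1⟩ f25 ⟨hx' _, cu' _ f25.1⟩
  · intro f hf
    rcases hf with hf | hf
    · exact compat_of hf f02 ⟨hx _, cu _ f02.1⟩ ⟨(hx' _).symm, fun h => cu' _ f02.1.symm h.symm⟩
        ⟨hxx, H.nonadj hx hx' hix hix'⟩
    · exact compat_of hf f04 ⟨hx _, cu _ f04.1⟩ f05 ⟨hx _, cu _ f05.1⟩
  · have e1 : s(c i, x) ≠ s(c (i + 2), x') := ne_edge f02.1 (hx' _).symm
    have e2 : s(c i, x) ≠ s(c (i + 4), c (i + 5)) := ne_edge f04.1 f05.1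
    have e3 : s(c (i + 2), x') ≠ s(c (i + 4), c (i + 5)) := ne_edge f24.1 f25.1
    rw [Set.ncard_insert_of_notMem (a := s(c i, x))
      (by simp only [Set.mem_insert_iff, Set.mem_singleton_iff]; tauto), Set.ncard_pair e3]
    have := Set.ncard_insert_le s(c i, c (i + 1)) {s(c (i + 4), c (i + 5))}
    rw [Set.ncard_singleton] at this
    omega
  · have noleaf : ∀ j x z, (∀ k, x ≠ c k) → G.Adj (c j) x → G.Adj x z → z = c j := by
      intro j x z h1 h2 h3
      by_contra h4
      exact H.no_pend hW j ⟨x, z, h1, h2, h3, h4⟩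
    intro f hf t ht w z hwz hw
    rcases hf with rfl | rfl | rfl
    · rcases Sym2.mem_iff.1 ht with rfl | rfl
      · exact self_dom (Or.inl rfl) (by simp) hw
      · refine ⟨_, Or.inl rfl, c i, by simp, Or.inl ?_⟩
        rcases hw with rfl | hw
        · exact Or.inr hix
        · exact Or.inl (noleaf _ _ _ hx hix hw).symm
    · rcases Sym2.mem_iff.1 ht with rfl | rfl
      · exact H.dom2 (H.no_pend hW _) (Or.inl rfl) (by simp) (Or.inr rfl) (by simp) hwz hw
      · refine ⟨_, Or.inl rfl, c (i + 1), by simp, ?_⟩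
        rcases hw with rfl | hw
        · right; right
          rw [noleaf _ _ _ hx' hix' hwz]
          exact H.adj12 i
        · left; right
          rw [noleaf _ _ _ hx' hix' hw]
          exact H.adj12 i
    · exact self_dom (Or.inr rfl) ht hw

/-- If every cycle vertex lacks pendant paths, every cycle vertex has a child. -/
lemma case4a [Finite V] (H : Cyc G g c) (hW : WellIndumatched G) (i : ℤ) {I : Set (Sym2 V)}
    (hI : IsInducedMatching G I)
    (hfar : ∀ f ∈ I, ∀ a ∈ f, ∀ k, -2 ≤ k → k ≤ 2 → c (i + k) ≠ a ∧ ¬ G.Adj (c (i + k)) a)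
    (h4 : ∃ e ∈ I, c (i + 4) ∈ e) (h4' : ∃ e ∈ I, c (i - 4) ∈ e) :
    ∃ x, (∀ k, x ≠ c k) ∧ G.Adj (c (i - 2)) x := by
  by_contra hno
  have h9 := H.h9
  have hf0 := fun f hf a ha => by
    simpa using hfar f hf a ha 0 (by omega) (by omega)
  have hf1 := fun f hf a ha => hfar f hf a ha 1 (by omega) (by omega)
  have hf2 := fun f hf a ha => hfar f hf a ha 2 (by omega) (by omega)
  have hf1' := fun f hf a ha => hfar f hf a ha (-1) (by omega) (by omega)
  have hf2' := fun f hf a ha => hfar f hf a ha (-2) (by omega) (by omega)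
  have hadj : G.Adj (c (i + -2)) (c (i + -1)) := by
    have := H.adj (i + -2)
    rwa [show i + -2 + 1 = i + -1 by ring] at this
  have hadj' : G.Adj (c (i + -1)) (c i) := by
    have := H.adj (i + -1)
    rwa [show i + -1 + 1 = i by ring] at this
  have notin : ∀ u v : V, (∀ f ∈ I, ∀ a ∈ f, u ≠ a) → s(u, v) ∉ I := by
    intro u v h h'
    exact h _ h' u (by simp) rfl
  refine IM.key (A := insert s(c i, c (i + 1)) I)
    (B := insert s(c (i + -2), c (i + -1)) (insert s(c (i + 1), c (i + 2)) I))
    (IM.insert hI (H.adj i) fun f hf a ha => ⟨hf0 f hf a ha, hf1 f hf a ha⟩)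
    (IM.insert (IM.insert hI (H.adj12 i) fun f hf a ha => ⟨hf1 f hf a ha, hf2 f hf a ha⟩)
      hadj ?_) ?_ ?_ hW
  · intro f hf
    rcases hf with hf | hf
    · refine compat_of hf (H.far' 3 ?_ ?_ ?_) (H.far' 2 ?_ ?_ ?_) (H.far' 4 ?_ ?_ ?_)
        (H.far' 3 ?_ ?_ ?_) <;> omega
    · exact fun a ha => ⟨hf2' f hf a ha, hf1' f hf a ha⟩
  · have n1 := notin (c (i + -2)) (c (i + -1)) fun f hf a ha => (hf2' f hf a ha).1
    have n2 := notin (c (i + 1)) (c (i + 2)) fun f hf a ha => (hf1 f hf a ha).1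
    have e1 : s(c (i + -2), c (i + -1)) ≠ s(c (i + 1), c (i + 2)) :=
      ne_edge (H.ne (by omega) (by omega) (by omega)) (H.ne (by omega) (by omega) (by omega))
    rw [Set.ncard_insert_of_notMem (a := s(c (i + -2), c (i + -1)))
        (by simp only [Set.mem_insert_iff]; tauto) (Set.toFinite _),
      Set.ncard_insert_of_notMem n2 (Set.toFinite _)]
    have := Set.ncard_insert_le s(c i, c (i + 1)) I
    omega
  · have key2 : ∀ z, G.Adj (c (i + -2)) z → ∃ e ∈ insert s(c i, c (i + 1)) I, ∃ a ∈ e,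
        (a = c (i + -2) ∨ G.Adj a (c (i + -2))) ∨ (a = z ∨ G.Adj a z) := by
      intro z hwz
      rcases H.nbr hwz with rfl | rfl | hz
      · refine ⟨_, Or.inl rfl, c i, by simp, Or.inr (Or.inr ?_)⟩
        rw [show i + -2 + 1 = i + -1 by ring]
        exact hadj'.symm
      · obtain ⟨e, he, he4⟩ := h4'
        refine ⟨e, Or.inr he, _, he4, Or.inr (Or.inr ?_)⟩
        have := H.adj (i - 4)
        rwa [show i - 4 + 1 = i + -2 - 1 by ring] at this
      · exact absurd ⟨z, hz, hwz⟩ hno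
    intro f hf t ht w z hwz hw
    rcases hf with rfl | rfl | hf
    · rcases Sym2.mem_iff.1 ht with rfl | rfl
      · rcases hw with rfl | hw
        · exact key2 z hwz
        · rcases H.nbr hw with rfl | rfl | hz
          · refine ⟨_, Or.inl rfl, c i, by simp, Or.inl (Or.inr ?_)⟩
            rw [show i + -2 + 1 = i + -1 by ring]
            exact hadj'.symm
          · obtain ⟨e, he, he4⟩ := h4'
            refine ⟨e, Or.inr he, _, he4, Or.inl (Or.inr ?_)⟩
            have := H.adj (i - 4)
            rwa [show i - 4 + 1 = i + -2 - 1 by ring] at this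
          · exact absurd ⟨w, hz, hw⟩ hno
      · rcases hw with rfl | hw
        · exact ⟨_, Or.inl rfl, c i, by simp, Or.inl (Or.inr hadj'.symm)⟩
        · rcases H.nbr hw with rfl | rfl | hz
          · refine ⟨_, Or.inl rfl, c i, by simp, ?_⟩
            left; left; congr 1; ring
          · rw [show i + -1 - 1 = i + -2 by ring] at hwz ⊢
            exact key2 z hwz
          · refine ⟨_, Or.inl rfl, c i, by simp, ?_⟩
            right; right
            have : z = c (i + -1) := by
              by_contra h
              exact H.no_pend hW _ ⟨w, z, hz, hw, hwz, h⟩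
            rw [this]
            exact hadj'.symm
    · rcases Sym2.mem_iff.1 ht with rfl | rfl
      · exact self_dom (Or.inl rfl) (by simp) hw
      · obtain ⟨e, he, he4⟩ := h4
        exact H.dom2 (H.no_pend hW _) (Or.inl rfl) (by simp) (Or.inr he) he4 hwz hw
    · exact self_dom (Or.inr hf) ht hw

lemma has_child [Finite V] (H : Cyc G g c) (h11 : g ≠ 11) (hW : WellIndumatched G) (i : ℤ) :
    ∃ x, (∀ k, x ≠ c k) ∧ G.Adj (c i) x := by
  have h9 := H.h9
  obtain ⟨m, hm⟩ := H.hodd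
  suffices h : ∃ x, (∀ k, x ≠ c k) ∧ G.Adj (c (i + 2 - 2)) x by
    rwa [show i + 2 - 2 = i by ring] at h
  generalize i + 2 = j
  by_cases hg : g = 9
  · refine H.case4a hW j (IM.single (H.adj45 j)) ?_ ⟨_, rfl, by simp⟩ ⟨_, rfl, ?_⟩
    · intro f hf a ha k hk1 hk2
      rw [Set.mem_singleton_iff] at hf
      subst hf
      rcases Sym2.mem_iff.1 ha with rfl | rfl
      · exact H.far' (4 - k) (by omega) (by omega) (by omega)
      · exact H.far' (5 - k) (by omega) (by omega) (by omega)
    · have : c (j - 4) = c (j + 5) := by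
        rw [H.hc]
        exact ⟨-1, by rw [hg]; push_cast; ring⟩
      rw [this]
      simp
  · have hadj : G.Adj (c (j - 5)) (c (j - 4)) := by
      have := H.adj (j - 5)
      rwa [show j - 5 + 1 = j - 4 by ring] at this
    refine H.case4a hW j (I := {s(c (j - 5), c (j - 4)), s(c (j + 4), c (j + 5))})
      (IM.insert (IM.single (H.adj45 j)) hadj ?_) ?_ ⟨_, Or.inr rfl, by simp⟩
      ⟨_, Or.inl rfl, by simp⟩
    · intro f hf
      refine compat_of hf (H.far' 9 ?_ ?_ ?_) (H.far' 8 ?_ ?_ ?_) (H.far' 10 ?_ ?_ ?_)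
        (H.far' 9 ?_ ?_ ?_) <;> omega
    · intro f hf a ha k hk1 hk2
      rcases hf with rfl | rfl
      · rcases Sym2.mem_iff.1 ha with rfl | rfl
        · exact H.far' (5 + k) (by omega) (by omega) (by omega)
        · exact H.far' (4 + k) (by omega) (by omega) (by omega)
      · rcases Sym2.mem_iff.1 ha with rfl | rfl
        · exact H.far' (4 - k) (by omega) (by omega) (by omega)
        · exact H.far' (5 - k) (by omega) (by omega) (by omega)

lemma not_wi [Finite V] (H : Cyc G g c) (h11 : g ≠ 11) : ¬ WellIndumatched G := by
  intro hW
  obtain ⟨x, hx, hix⟩ := H.has_child h11 hW 0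
  obtain ⟨x', hx', hix'⟩ := H.has_child h11 hW (0 + 2)
  exact H.case4b hW hx hix hx' hix'

end Cyc

end Core

section Final

variable {V : Type*}

lemma exists_param {G : SimpleGraph V} {g : ℕ} (hg : 9 ≤ g) (hgirth : G.girth = g) :
    ∃ c : ℤ → V, (∀ i, G.Adj (c i) (c (i + 1))) ∧ (∀ i j, c i = c j ↔ (g : ℤ) ∣ i - j) := by
  have hna : ¬ G.IsAcyclic := by
    intro h
    rw [girth_eq_zero.2 h] at hgirth
    omega
  obtain ⟨a, w, hw, hl⟩ := exists_girth_eq_length.2 hna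
  rw [hgirth] at hl
  have hgpos : (0 : ℤ) < g := by omega
  have e0 : w.getVert g = w.getVert 0 := by
    rw [hl, Walk.getVert_length, Walk.getVert_zero]
  refine ⟨fun k => w.getVert (k % g).toNat, fun i => ?_, fun i j => ?_⟩
  · have h0 := Int.emod_nonneg i hgpos.ne'
    have h1 := Int.emod_lt_of_pos i hgpos
    have hadj := w.adj_getVert_succ (i := (i % g).toNat) (by omega)
    by_cases hlast : i % g = g - 1
    · have : (i + 1) % g = 0 := by
        rw [Int.add_emod, hlast, Int.emod_eq_zero_of_dvd]
        rw [Int.emod_eq_of_lt (a := 1) (by omega) (by omega)]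
        exact ⟨1, by ring⟩
      have h2 : (i % g).toNat + 1 = g := by omega
      rw [h2, e0] at hadj
      simpa [this] using hadj
    · have : (i + 1) % g = i % g + 1 := by
        rw [Int.add_emod, Int.emod_eq_of_lt (a := 1) (by omega) (by omega)]
        exact Int.emod_eq_of_lt (by omega) (by omega)
      have h2 : ((i + 1) % g).toNat = (i % g).toNat + 1 := by omega
      simpa [h2] using hadj
  · have hi0 := Int.emod_nonneg i hgpos.ne'
    have hi1 := Int.emod_lt_of_pos i hgpos
    have hj0 := Int.emod_nonneg j hgpos.ne'
    have hj1 := Int.emod_lt_of_pos j hgpos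
    constructor
    · intro h
      have := hw.getVert_injOn' (x₁ := (i % g).toNat) (x₂ := (j % g).toNat)
        (by simp only [Set.mem_ofPred_eq]; omega) (by simp only [Set.mem_ofPred_eq]; omega) h
      exact Int.ModEq.dvd (show j % g = i % g by omega)
    · intro h
      have : i % g = j % g := (Int.modEq_iff_dvd.2 h).symm
      simp only [this]

lemma final {G : SimpleGraph V} [Finite V] {g : ℕ} (hodd : Odd g) (hg : 9 ≤ g) (hne : g ≠ 11)
    (hgirth : G.girth = g) : ¬ WellIndumatched G := by
  intro hW
  obtain ⟨c, hadj, hc⟩ := exists_param hg hgirth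
  let near : V → Prop := fun u => ∃ i, u = c i ∨ G.Adj u (c i)
  obtain ⟨K, hK⟩ := (Set.toFinite {M : Set (Sym2 V) | IsInducedMatching G M ∧
    ∀ e ∈ M, ∀ u ∈ e, ¬ near u}).exists_maximal
      ⟨∅, ⟨by simp, by simp⟩, by simp⟩
  obtain ⟨⟨hKI, hKn⟩, hKmax⟩ := hK
  have hcU : ∀ i, c i ∈ surv G K := by
    intro i e he a ha
    refine ⟨?_, fun h => ?_⟩
    · rintro rfl
      exact hKn e he _ ha ⟨i, Or.inl rfl⟩
    · exact hKn e he _ ha ⟨i, Or.inr h.symm⟩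
  have hle : resG G (surv G K) ≤ G := fun u v h => h.1
  have H : Cyc (resG G (surv G K)) g c := by
    refine ⟨hodd, hg, fun i => ⟨hadj i, hcU _, hcU _⟩, hc, ?_, ?_⟩
    · intro v w hw
      have := girth_le_length (hw.mapLe hle)
      rw [hgirth] at this
      simpa using this
    · rintro u v ⟨huv, hu, hv⟩
      by_contra hcon
      have hnu : ¬ near u := by
        rintro ⟨i, h | h⟩
        · exact hcon (Or.inl ⟨i, Or.inl h⟩)
        · exact hcon (Or.inl ⟨i, Or.inr ⟨h, hu, hcU i⟩⟩)
      have hnv : ¬ near v := by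
        rintro ⟨i, h | h⟩
        · exact hcon (Or.inr ⟨i, Or.inl h⟩)
        · exact hcon (Or.inr ⟨i, Or.inr ⟨h, hv, hcU i⟩⟩)
      have hmem : s(u, v) ∈ K := by
        refine hKmax (y := insert s(u, v) K) ⟨IM.insert hKI huv fun f hf a ha =>
          ⟨hu f hf a ha, hv f hf a ha⟩, ?_⟩ (Set.subset_insert _ _) (Set.mem_insert _ _)
        rintro e (rfl | he) x hx
        · rcases Sym2.mem_iff.1 hx with rfl | rfl
          · exact hnu
          · exact hnv
        · exact hKn e he x hx
      exact (hu _ hmem u (by simp)).1 rfl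
  exact H.not_wi hne (WI.res hKI hW)

end Final

/-- For every odd integer `g ≥ 9` with `g ≠ 11`, there is no well-indumatched graph of
girth `g`. -/
theorem stmt_17 (g : ℕ) (hodd : Odd g) (hg : 9 ≤ g) (hne : g ≠ 11)
    {V : Type*} [Fintype V] (G : SimpleGraph V) (hgirth : G.girth = g) :
    ¬ WellIndumatched G := by
  exact final hodd hg hne hgirth
end
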